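/- arXiv:2310.18202 — 4 statements merged into one kernel-verified Lean document; each statement's English description precedes it below -/
import Mathlib

section
/- Let E : a_1 x_1 + a_2 x_2 + ... + a_k x_k = 0 be a translation-invariant equation of genus at least 2. Then there exists a constant K > 0 (depending only on E) such that for every positive integer N, R_E(N) ≤ K·√N; equivalently, every set A ⊆ {1,...,N} with |A| > K·√N contains pairwise distinct integers x_1, ..., x_k ∈ A satisfying a_1 x_1 + ... + a_k x_k = 0. -/
theorem aux_core {X : Type*} [DecidableEq X] (n D : ℕ) (φ : ℕ → X → ℤ) :
    ∀ (m : ℕ) (G : Finset X), G.card = m →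
      D * ∑ t ∈ Finset.range n, (G.image (φ t)).card < G.card →
      ∃ H ⊆ G, H.Nonempty ∧ ∀ p ∈ H, ∀ t < n, D < (H.filter (fun q => φ t q = φ t p)).card := by
  intro m
  induction m using Nat.strong_induction_on with
  | _ m ih =>
    intro G hm hG
    by_cases h : ∀ p ∈ G, ∀ t < n, D < (G.filter (fun q => φ t q = φ t p)).card
    · refine ⟨G, subset_rfl, ?_, h⟩
      rw [← Finset.card_pos]; omega
    · push Not at h
      obtain ⟨p, hp, t, ht, hD⟩ := h
      set G' := G.filter (fun q => ¬ φ t q = φ t p) with hG'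
      have hcard := Finset.card_filter_add_card_filter_not (s := G) (fun q => φ t q = φ t p)
      rw [← hG'] at hcard
      have hpos : 0 < (G.filter (fun q => φ t q = φ t p)).card :=
        Finset.card_pos.mpr ⟨p, by simp [hp]⟩
      have hsub : G' ⊆ G := Finset.filter_subset _ _
      have hlt : ∑ s ∈ Finset.range n, (G'.image (φ s)).card
          < ∑ s ∈ Finset.range n, (G.image (φ s)).card := by
        apply Finset.sum_lt_sum
        · intro s _
          exact Finset.card_le_card (Finset.image_subset_image hsub)
        · refine ⟨t, Finset.mem_range.mpr ht, Finset.card_lt_card ?_⟩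
          refine ⟨Finset.image_subset_image hsub, fun hh => ?_⟩
          have := hh (Finset.mem_image_of_mem (φ t) hp)
          rw [Finset.mem_image] at this
          obtain ⟨q, hq, hqp⟩ := this
          rw [hG', Finset.mem_filter] at hq
          exact hq.2 hqp
      have h2 : D * ∑ s ∈ Finset.range n, (G'.image (φ s)).card + D
          ≤ D * ∑ s ∈ Finset.range n, (G.image (φ s)).card := by
        calc _ = D * (∑ s ∈ Finset.range n, (G'.image (φ s)).card + 1) := by ring
          _ ≤ _ := Nat.mul_le_mul_left _ hlt
      obtain ⟨H, hH, h3⟩ := ih G'.card (by omega) G' rfl (by omega)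
      exact ⟨H, hH.trans hsub, h3⟩

theorem aux_walk (n : ℕ) (α β : ℕ → ℤ) (hα : ∀ t < n, 0 < α t) (hβ : ∀ t < n, 0 < β t)
    (H : Finset (ℤ × ℤ)) (hne : H.Nonempty)
    (hH : ∀ p ∈ H, ∀ t < n, 4 * n + 4 <
      (H.filter (fun q => α t * q.1 + β t * q.2 = α t * p.1 + β t * p.2)).card) :
    ∀ j ≤ n, ∃ p : ℕ → ℤ × ℤ, (∀ t ≤ j, p t ∈ H) ∧
      (∀ t < j, α t * (p (t+1)).1 + β t * (p (t+1)).2 = α t * (p t).1 + β t * (p t).2) ∧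
      (∀ t ≤ j, ∀ s < t, (p s).1 ≠ (p t).1 ∧ (p s).1 ≠ (p t).2 ∧ (p s).2 ≠ (p t).1 ∧
        (p s).2 ≠ (p t).2) := by
  intro j
  induction j with
  | zero =>
    intro _
    obtain ⟨q, hq⟩ := hne
    exact ⟨fun _ => q, fun _ _ => hq, by simp, by
      intro t ht s hs; omega⟩
  | succ j ih =>
    intro hj
    obtain ⟨p, h1, h2, h3⟩ := ih (by omega)
    set S : Finset ℤ := (Finset.range (j+1)).image (fun t => (p t).1) ∪
      (Finset.range (j+1)).image (fun t => (p t).2) with hS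
    have hScard : S.card ≤ 2 * (j + 1) := by
      refine (Finset.card_union_le _ _).trans ?_
      have e1 := Finset.card_image_le (s := Finset.range (j+1)) (f := fun t => (p t).1)
      have e2 := Finset.card_image_le (s := Finset.range (j+1)) (f := fun t => (p t).2)
      simp only [Finset.card_range] at e1 e2
      omega
    set C := H.filter (fun q => α j * q.1 + β j * q.2 = α j * (p j).1 + β j * (p j).2) with hC
    have hCc : 4 * n + 4 < C.card := hH (p j) (h1 j le_rfl) j (by omega)
    have ha := hα j (by omega)
    have hb := hβ j (by omega)
    have hB1 : (C.filter (fun q => q.1 ∈ S)).card ≤ S.card := by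
      apply Finset.card_le_card_of_injOn (fun q => q.1)
      · intro q hq; simp at hq; exact hq.2
      · intro q hq r hr hqr
        simp only [hC, Finset.coe_filter, Finset.mem_filter, Set.mem_setOf_eq] at hq hr hqr
        have e : β j * q.2 = β j * r.2 := by
          have := hq.1.2; have := hr.1.2; rw [hqr] at *; linarith
        exact Prod.ext hqr (mul_left_cancel₀ hb.ne' e)
    have hB2 : (C.filter (fun q => q.2 ∈ S)).card ≤ S.card := by
      apply Finset.card_le_card_of_injOn (fun q => q.2)
      · intro q hq; simp at hq; exact hq.2
      · intro q hq r hr hqr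
        simp only [hC, Finset.coe_filter, Finset.mem_filter, Set.mem_setOf_eq] at hq hr hqr
        have e : α j * q.1 = α j * r.1 := by
          have := hq.1.2; have := hr.1.2; rw [hqr] at *; linarith
        exact Prod.ext (mul_left_cancel₀ ha.ne' e) hqr
    have : ∃ q ∈ C, q.1 ∉ S ∧ q.2 ∉ S := by
      by_contra hcon
      push Not at hcon
      have : C ⊆ C.filter (fun q => q.1 ∈ S) ∪ C.filter (fun q => q.2 ∈ S) := by
        intro q hq
        have := hcon q hq
        simp only [Finset.mem_union, Finset.mem_filter]
        tauto
      have := (Finset.card_le_card this).trans (Finset.card_union_le _ _)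
      omega
    obtain ⟨q, hq, hq1, hq2⟩ := this
    have hSm : ∀ s ≤ j, (p s).1 ∈ S ∧ (p s).2 ∈ S := by
      intro s hs
      constructor
      · exact Finset.mem_union_left _ (Finset.mem_image.mpr ⟨s, Finset.mem_range.mpr (by omega), rfl⟩)
      · exact Finset.mem_union_right _ (Finset.mem_image.mpr ⟨s, Finset.mem_range.mpr (by omega), rfl⟩)
    rw [hC, Finset.mem_filter] at hq
    refine ⟨fun t => if t ≤ j then p t else q, ?_, ?_, ?_⟩
    · intro t ht
      by_cases h : t ≤ j
      · simp only [h, if_true]; exact h1 t h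
      · simp only [h, if_false]; exact hq.1
    · intro t ht
      by_cases h : t + 1 ≤ j
      · have h' : t ≤ j := by omega
        simp only [h, h', if_true]; exact h2 t h
      · have h' : t = j := by omega
        subst h'
        simp only [h, if_false, le_refl, if_true]
        exact hq.2
    · intro t ht s hs
      have hs' : s ≤ j := by omega
      by_cases h : t ≤ j
      · simp only [h, hs', if_true]; exact h3 t h s hs
      · simp only [h, hs', if_true, if_false]
        obtain ⟨m1, m2⟩ := hSm s hs'
        refine ⟨?_, ?_, ?_, ?_⟩ <;> intro e
        · exact hq1 (e ▸ m1)
        · exact hq2 (e ▸ m1)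
        · exact hq1 (e ▸ m2)
        · exact hq2 (e ▸ m2)

theorem aux_time (k : ℕ) (a : Fin k → ℤ) (ha : ∀ i, a i ≠ 0) (T : Finset (Fin k))
    (hT : T.Nonempty) (hs : ∑ i ∈ T, a i = 0) :
    ∃ τ : Fin k → ℕ, (∀ i, τ i ≤ 2 * k + 2) ∧ Function.Injective τ ∧
      ∀ t < 2 * k + 2, 0 < ∑ i ∈ T with τ i ≤ t, a i := by
  obtain ⟨i0, hi0⟩ := hT
  obtain ⟨p, hp, hp0⟩ := Finset.exists_pos_of_sum_zero_of_exists_nonzero a hs ⟨i0, hi0, ha i0⟩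
  obtain ⟨m, hm, hm0⟩ := Finset.exists_pos_of_sum_zero_of_exists_nonzero (fun i => - a i)
    (by simp [hs]) ⟨i0, hi0, by simpa using ha i0⟩
  have hpm : p ≠ m := by rintro rfl; omega
  set τ : Fin k → ℕ := fun i => if i = p then 0 else if i = m then 2 * k + 2 else
    if 0 < a i then i.1 + 1 else k + 1 + i.1 with hτ
  have hsplit : ∀ t, ∑ i ∈ T with τ i ≤ t, a i + ∑ i ∈ T with ¬ τ i ≤ t, a i = 0 := by
    intro t; rw [Finset.sum_filter_add_sum_filter_not, hs]
  refine ⟨τ, ?_, ?_, ?_⟩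
  · intro i
    simp only [hτ]
    have := i.2
    split_ifs <;> omega
  · intro i j hij
    simp only [hτ] at hij
    have := i.2
    have := j.2
    apply Fin.ext
    split_ifs at hij <;> first | omega | (subst_vars; rfl)
  · intro t ht
    by_cases h : t ≤ k
    · apply Finset.sum_pos
      · intro i hi
        have h2 := (Finset.mem_filter.mp hi).2
        simp only [hτ] at h2
        split_ifs at h2 with c1 c2 c3
        · rw [c1]; exact hp0
        · omega
        · exact c3
        · omega
      · exact ⟨p, by simp [hp, hτ]⟩
    · have hneg : 0 < ∑ i ∈ T with ¬ τ i ≤ t, - a i := by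
        apply Finset.sum_pos
        · intro i hi
          have h2 := (Finset.mem_filter.mp hi).2
          simp only [hτ] at h2
          have := i.2
          have := ha i
          split_ifs at h2 with c1 c2 c3
          · omega
          · rw [c2]; exact hm0
          · omega
          · omega
        · refine ⟨m, ?_⟩
          simp only [Finset.mem_filter, hm, true_and, hτ, if_neg hpm.symm, if_true]
          omega
      rw [Finset.sum_neg_distrib] at hneg
      have := hsplit t
      omega

theorem aux_abel {ι : Type*} (T : Finset ι) (a : ι → ℤ) (hs : ∑ i ∈ T, a i = 0)
    (n : ℕ) (τ : ι → ℕ) (hτ : ∀ i, τ i ≤ n) (X : ℕ → ℤ) :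
    ∑ i ∈ T, a i * X (τ i) =
      - ∑ t ∈ Finset.range n, (∑ i ∈ T with τ i ≤ t, a i) * (X (t+1) - X t) := by
  have key : ∀ m ≤ n, X m = X n - ∑ t ∈ Finset.range n, if m ≤ t then X (t+1) - X t else 0 := by
    intro m hm
    rw [← Finset.sum_filter]
    have : (Finset.range n).filter (fun t => m ≤ t) = Finset.Ico m n := by
      ext t; simp; omega
    rw [this, Finset.sum_Ico_sub (f := X) hm]
    ring
  calc ∑ i ∈ T, a i * X (τ i)
      = ∑ i ∈ T, a i * (X n - ∑ t ∈ Finset.range n, if τ i ≤ t then X (t+1) - X t else 0) := by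
        refine Finset.sum_congr rfl fun i _ => ?_
        rw [← key _ (hτ i)]
    _ = (∑ i ∈ T, a i) * X n
        - ∑ i ∈ T, ∑ t ∈ Finset.range n, a i * (if τ i ≤ t then X (t+1) - X t else 0) := by
        simp only [mul_sub, Finset.sum_sub_distrib, Finset.sum_mul, Finset.mul_sum]
    _ = _ := by
        rw [hs, Finset.sum_comm]
        simp only [zero_mul, zero_sub, neg_inj]
        refine Finset.sum_congr rfl fun t _ => ?_
        rw [Finset.sum_filter, Finset.sum_mul]
        refine Finset.sum_congr rfl fun i _ => ?_
        split_ifs <;> simp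


/-- Let `E : a₁x₁ + ⋯ + a_k x_k = 0` be a translation-invariant equation
(all coefficients nonzero, summing to zero) of genus at least 2 (here expressed as the
existence of a partition of the index set into two nonempty parts, each with zero
coefficient sum; this is equivalent to genus ≥ 2).  Then there is a constant `K > 0`
such that for every `N ≥ 1`, every `A ⊆ {1, …, N}` with `|A| > K·√N` contains pairwise
distinct integers `x₁, …, x_k` with `a₁x₁ + ⋯ + a_k x_k = 0`. -/
theorem stmt_0 (k : ℕ) (a : Fin k → ℤ)
    (ha : ∀ i, a i ≠ 0) (hsum : ∑ i, a i = 0)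
    (hgenus : ∃ T : Finset (Fin k), T.Nonempty ∧ Tᶜ.Nonempty ∧
      ∑ i ∈ T, a i = 0 ∧ ∑ i ∈ Tᶜ, a i = 0) :
    ∃ K : ℝ, 0 < K ∧ ∀ N : ℕ, 0 < N → ∀ A : Finset ℤ,
      (∀ x ∈ A, x ∈ Finset.Icc (1 : ℤ) N) →
      K * Real.sqrt N < (A.card : ℝ) →
      ∃ x : Fin k → ℤ, Function.Injective x ∧ (∀ i, x i ∈ A) ∧ ∑ i, a i * x i = 0 := by
  obtain ⟨T, hT, hTc, hs, hsc⟩ := hgenus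
  obtain ⟨τ, hτ, hτi, hα⟩ := aux_time k a ha T hT hs
  obtain ⟨σ, hσ, hσi, hβ⟩ := aux_time k a ha Tᶜ hTc hsc
  set n := 2 * k + 2 with hn
  set α : ℕ → ℤ := fun t => ∑ i ∈ T with τ i ≤ t, a i with hαd
  set β : ℕ → ℤ := fun t => ∑ i ∈ Tᶜ with σ i ≤ t, a i with hβd
  obtain ⟨M, hM⟩ : ∃ M : ℕ, (M : ℤ) = ∑ i, |a i| :=
    ⟨(∑ i, |a i|).toNat, Int.toNat_of_nonneg (Finset.sum_nonneg fun _ _ => abs_nonneg _)⟩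
  have hbd : ∀ U : Finset (Fin k), ∑ i ∈ U, a i ≤ M := by
    intro U
    rw [hM]
    calc _ ≤ ∑ i ∈ U, |a i| := Finset.sum_le_sum fun _ _ => le_abs_self _
      _ ≤ _ := Finset.sum_le_univ_sum_of_nonneg fun _ => abs_nonneg _
  set D := 4 * n + 4 with hD
  set c : ℕ := D * (n * (2 * M + 1)) with hc
  refine ⟨2 * c + 2, by positivity, ?_⟩
  intro N hN A hA hcard
  have hN1 : (1 : ℝ) ≤ N := by exact_mod_cast hN
  have hsq : 1 ≤ Real.sqrt N := by rw [Real.one_le_sqrt]; exact hN1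
  have hss : Real.sqrt N * Real.sqrt N = N := Real.mul_self_sqrt (by linarith)
  have hc0 : (0 : ℝ) ≤ c := Nat.cast_nonneg _
  have hA2 : (2 : ℝ) < A.card := by nlinarith
  have hoff : c * N < A.offDiag.card := by
    rw [Finset.offDiag_card]
    have h1 : (c * N + A.card : ℝ) < A.card * A.card := by
      have : (2 * c + 2) * Real.sqrt N * ((2 * c + 2) * Real.sqrt N) < (A.card : ℝ) * A.card :=
        mul_self_lt_mul_self (by positivity) hcard
      have h3 : (2 * c + 2) * Real.sqrt N * ((2 * c + 2) * Real.sqrt N)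
        = (2 * c + 2) * (2 * c + 2) * (N : ℝ) := by
        linear_combination (2 * (c:ℝ) + 2) * (2 * c + 2) * hss
      rw [h3] at this
      have h4 : (2 * c) * (N : ℝ) ≤ (2 * c + 2) * (2 * c + 2) * (N : ℝ) := by
        apply mul_le_mul_of_nonneg_right _ (by linarith)
        nlinarith
      nlinarith
    have h2 : c * N + A.card < A.card * A.card := by exact_mod_cast h1
    omega
  have himg : ∀ t < n, (A.offDiag.image (fun q => α t * q.1 + β t * q.2)).card
      ≤ (2 * M + 1) * N := by
    intro t ht
    have hsub : A.offDiag.image (fun q => α t * q.1 + β t * q.2)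
        ⊆ Finset.Icc (0:ℤ) (2 * M * N) := by
      intro z hz
      obtain ⟨q, hq, rfl⟩ := Finset.mem_image.mp hz
      rw [Finset.mem_offDiag] at hq
      have e1 := Finset.mem_Icc.mp (hA _ hq.1)
      have e2 := Finset.mem_Icc.mp (hA _ hq.2.1)
      have f1 := hα t ht
      have f2 := hβ t ht
      have g1 : α t ≤ M := hbd _
      have g2 : β t ≤ M := hbd _
      have p1 : α t * q.1 ≤ M * N := mul_le_mul g1 e1.2 (by linarith) (by positivity)
      have p2 : β t * q.2 ≤ M * N := mul_le_mul g2 e2.2 (by linarith) (by positivity)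
      have p3 : 0 ≤ α t * q.1 := mul_nonneg f1.le (by linarith)
      have p4 : 0 ≤ β t * q.2 := mul_nonneg f2.le (by linarith)
      rw [Finset.mem_Icc]
      constructor <;> linarith
    refine (Finset.card_le_card hsub).trans ?_
    rw [Int.card_Icc]
    have : (2 * (M:ℤ) * N + 1 - 0).toNat = 2 * M * N + 1 := by
      have : (2 * (M:ℤ) * N + 1 - 0) = ((2 * M * N + 1 : ℕ) : ℤ) := by push_cast; ring
      rw [this, Int.toNat_natCast]
    rw [this]
    nlinarith
  obtain ⟨H, hHA, hHne, hH⟩ := aux_core n D (fun t (q : ℤ × ℤ) => α t * q.1 + β t * q.2)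
    _ A.offDiag rfl (by
      refine lt_of_le_of_lt ?_ hoff
      rw [hc, mul_assoc]
      apply Nat.mul_le_mul_left
      refine (Finset.sum_le_card_nsmul _ _ ((2 * M + 1) * N) ?_).trans ?_
      · intro t ht; exact himg t (Finset.mem_range.mp ht)
      · simp [mul_assoc])
  obtain ⟨p, hp1, hp2, hp3⟩ := aux_walk n α β hα hβ H hHne hH n le_rfl
  have hmem : ∀ t ≤ n, (p t).1 ∈ A ∧ (p t).2 ∈ A ∧ (p t).1 ≠ (p t).2 := fun t ht =>
    Finset.mem_offDiag.mp (hHA (hp1 t ht))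
  have hXX : ∀ s ≤ n, ∀ t ≤ n, (p s).1 = (p t).1 → s = t := by
    intro s hs t ht e
    rcases lt_trichotomy s t with h | h | h
    · exact absurd e (hp3 t ht s h).1
    · exact h
    · exact absurd e.symm (hp3 s hs t h).1
  have hYY : ∀ s ≤ n, ∀ t ≤ n, (p s).2 = (p t).2 → s = t := by
    intro s hs t ht e
    rcases lt_trichotomy s t with h | h | h
    · exact absurd e (hp3 t ht s h).2.2.2
    · exact h
    · exact absurd e.symm (hp3 s hs t h).2.2.2
  have hXY : ∀ s ≤ n, ∀ t ≤ n, (p s).1 ≠ (p t).2 := by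
    intro s hs t ht e
    rcases lt_trichotomy s t with h | h | h
    · exact absurd e (hp3 t ht s h).2.1
    · subst h; exact (hmem s hs).2.2 e
    · exact absurd e.symm (hp3 s hs t h).2.2.1
  refine ⟨fun i => if i ∈ T then (p (τ i)).1 else (p (σ i)).2, ?_, ?_, ?_⟩
  · intro i j hij
    by_cases hi : i ∈ T <;> by_cases hj : j ∈ T <;> simp only [hi, hj, if_true, if_false] at hij
    · exact hτi (hXX _ (hτ i) _ (hτ j) hij)
    · exact absurd hij (hXY _ (hτ i) _ (hσ j))
    · exact absurd hij.symm (hXY _ (hτ j) _ (hσ i))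
    · exact hσi (hYY _ (hσ i) _ (hσ j) hij)
  · intro i
    by_cases hi : i ∈ T <;> simp only [hi, if_true, if_false]
    · exact (hmem _ (hτ i)).1
    · exact (hmem _ (hσ i)).2.1
  · rw [← Finset.sum_add_sum_compl T]
    have e1 : ∑ i ∈ T, a i * (if i ∈ T then (p (τ i)).1 else (p (σ i)).2)
        = ∑ i ∈ T, a i * (fun t => (p t).1) (τ i) :=
      Finset.sum_congr rfl fun i hi => by simp [hi]
    have e2 : ∑ i ∈ Tᶜ, a i * (if i ∈ T then (p (τ i)).1 else (p (σ i)).2)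
        = ∑ i ∈ Tᶜ, a i * (fun t => (p t).2) (σ i) :=
      Finset.sum_congr rfl fun i hi => by simp [Finset.mem_compl.mp hi]
    rw [e1, e2, aux_abel T a hs n τ hτ (fun t => (p t).1),
      aux_abel Tᶜ a hsc n σ hσ (fun t => (p t).2), ← neg_add,
      ← Finset.sum_add_distrib, neg_eq_zero]
    apply Finset.sum_eq_zero
    intro t ht
    have := hp2 t (Finset.mem_range.mp ht)
    simp only [hαd, hβd] at this
    linarith
end

section
/- Every translation-invariant equation of genus at least 2 is abundant: if E : a_1 x_1 + ... + a_ℓ x_ℓ = 0 is a translation-invariant equation in ℓ variables of genus at least 2, then there exist constants γ, C > 0 (depending only on E) such that for every ε ∈ (0,1) and every positive integer N, every subset A ⊆ {1,...,N} with |A| ≥ ε·N contains at least γ·ε^C·N^{ℓ−1} solutions (x_1,...,x_ℓ) ∈ A^ℓ to E. -/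
open Finset in
lemma aux_cs {α : Type*} [DecidableEq α] (S : Finset α) (L : α → ℤ) (B : Finset ℤ)
    (h : ∀ u ∈ S, L u ∈ B) :
    S.card ^ 2 ≤ B.card * ((S ×ˢ S).filter (fun p => L p.1 = L p.2)).card := by
  have h1 : S.card = ∑ b ∈ B, (S.filter (fun u => L u = b)).card :=
    Finset.card_eq_sum_card_fiberwise h
  have h2 : ((S ×ˢ S).filter (fun p => L p.1 = L p.2)).card
      = ∑ b ∈ B, (S.filter (fun u => L u = b)).card ^ 2 := by
    rw [Finset.card_eq_sum_card_fiberwise (f := fun p : α × α => L p.1) (t := B)]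
    · refine Finset.sum_congr rfl fun b _ => ?_
      rw [sq, ← Finset.card_product]
      congr 1
      ext ⟨u, w⟩
      simp only [Finset.mem_filter, Finset.mem_product]
      constructor
      · rintro ⟨⟨⟨a, b⟩, c⟩, d⟩
        exact ⟨⟨a, d⟩, b, c ▸ d⟩
      · rintro ⟨⟨a, d⟩, b, c⟩
        exact ⟨⟨⟨a, b⟩, d.trans c.symm⟩, d⟩
    · intro p hp
      have hp' := Finset.mem_filter.1 (Finset.mem_coe.1 hp)
      exact h _ (Finset.mem_product.1 hp'.1).1
  rw [h2]
  conv_lhs => rw [h1]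
  exact sq_sum_le_card_mul_sum_sq

def auxSol {ι : Type*} [Fintype ι] [DecidableEq ι] (a : ι → ℤ) (rt : ι → ι) (i0 i1 j0 : ι)
    (A : Finset ℤ) (s : Finset ι) : Finset (ι → ℤ) :=
  (Fintype.piFinset (fun i => if i ∈ insert i0 (insert i1 (insert j0 s)) then A else {0})).filter
    (fun x => a i1 * (x i1 - x i0) + ∑ i ∈ s, a i * (x i - x (rt i)) = 0)

lemma aux_mem {ι : Type*} [Fintype ι] [DecidableEq ι] (a : ι → ℤ) (rt : ι → ι) (i0 i1 j0 : ι)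
    (A : Finset ℤ) (s : Finset ι) (x : ι → ℤ) :
    x ∈ auxSol a rt i0 i1 j0 A s ↔
      (∀ i ∈ insert i0 (insert i1 (insert j0 s)), x i ∈ A) ∧
      (∀ i ∉ insert i0 (insert i1 (insert j0 s)), x i = 0) ∧
      a i1 * (x i1 - x i0) + ∑ i ∈ s, a i * (x i - x (rt i)) = 0 := by
  unfold auxSol
  rw [Finset.mem_filter, Fintype.mem_piFinset]
  constructor
  · rintro ⟨h, h2⟩
    refine ⟨fun i hi => ?_, fun i hi => ?_, h2⟩
    · have := h i
      rwa [if_pos hi] at this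
    · have := h i
      rw [if_neg hi] at this
      simpa using this
  · rintro ⟨h, h1, h2⟩
    refine ⟨fun i => ?_, h2⟩
    by_cases hi : i ∈ insert i0 (insert i1 (insert j0 s))
    · rw [if_pos hi]; exact h i hi
    · rw [if_neg hi, h1 i hi]; simp

lemma aux_card_pi {ι : Type*} [Fintype ι] [DecidableEq ι] (A : Finset ℤ) (F : Finset ι)
    (g : ι → ℤ) :
    (Fintype.piFinset (fun i => if i ∈ F then A else {g i})).card = A.card ^ F.card := by
  rw [Fintype.card_piFinset]
  have : ∀ i, (if i ∈ F then A else {g i}).card = if i ∈ F then A.card else 1 := by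
    intro i; split_ifs <;> simp
  simp only [this]
  rw [Finset.prod_ite_mem]
  simp

/-- fibre bound -/
lemma aux_fib {ι : Type*} [Fintype ι] [DecidableEq ι] (a : ι → ℤ) (rt : ι → ι) (i0 i1 j0 : ι)
    (ha : ∀ i, a i ≠ 0) (h01 : i0 ≠ i1) (h0j : i0 ≠ j0) (h1j : i1 ≠ j0)
    (hrt : ∀ i, rt i = i0 ∨ rt i = j0) (j1 : ι) (hj1 : j1 ≠ i0 ∧ j1 ≠ i1 ∧ j1 ≠ j0)
    (A : Finset ℤ) (s : Finset ι) (r : ι) (hr : r = i0 ∨ r = j0)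
    (hs : j1 ∈ s ∨ (s = ∅ ∧ r = j0)) (α β : ℤ) :
    ((auxSol a rt i0 i1 j0 A s).filter (fun w => w i1 = α ∧ w r = β)).card ≤ A.card ^ s.card := by
  rcases hs with hs | ⟨rfl, rfl⟩
  · obtain ⟨o, ho, hor⟩ : ∃ o, (∀ i, i = i0 ∨ i = j0 ↔ i = o ∨ i = r) ∧ o ≠ r := by
      rcases hr with rfl | rfl
      · exact ⟨j0, fun i => or_comm, h0j.symm⟩
      · exact ⟨i0, fun i => Iff.rfl, h0j⟩
    set g : ι → ℤ := fun i => if i = i1 then α else if i = r then β else 0 with hg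
    set F := insert o (s.erase j1) \ {i1, r} with hF
    have hFc : F.card ≤ s.card := by
      calc F.card ≤ (insert o (s.erase j1)).card := Finset.card_le_card Finset.sdiff_subset
        _ ≤ (s.erase j1).card + 1 := Finset.card_insert_le _ _
        _ = s.card := Finset.card_erase_add_one hs
    have hsol : ((auxSol a rt i0 i1 j0 A s).filter (fun w => w i1 = α ∧ w r = β)).card
        ≤ A.card ^ F.card := by
      rw [← aux_card_pi A F g]
      refine Finset.card_le_card_of_injOn (fun w => Function.update w j1 0) ?_ ?_
      · intro w hw
        have hw := Finset.mem_filter.1 (Finset.mem_coe.1 hw)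
        obtain ⟨hw, hα, hβ⟩ := hw
        rw [aux_mem] at hw
        obtain ⟨hA, h0, -⟩ := hw
        refine Finset.mem_coe.2 (Fintype.mem_piFinset.2 fun i => ?_)
        have hoi := ho i
        have hj1r : j1 ≠ r := by rcases hr with rfl | rfl; exacts [hj1.1, hj1.2.2]
        have hj1o : j1 ≠ o := by
          rcases (ho o).2 (Or.inl rfl) with rfl | rfl; exacts [hj1.1, hj1.2.2]
        by_cases hi : i = j1
        · subst hi
          have : i ∉ F := by simp [hF, hj1o]
          rw [if_neg this]
          simp [hg, hj1.2.1, hj1r]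
        · simp only [Function.update_of_ne hi]
          by_cases hiF : i ∈ F
          · rw [if_pos hiF]
            apply hA
            simp only [hF, Finset.mem_sdiff, Finset.mem_insert, Finset.mem_erase] at hiF ⊢
            tauto
          · rw [if_neg hiF]
            by_cases hi1 : i = i1
            · simp [hg, hi1, hα]
            · by_cases hir : i = r
              · subst hir; simp [hg, hi1, hβ]
              · simp only [hg, if_neg hi1, if_neg hir, Finset.mem_singleton]
                apply h0
                simp only [hF, Finset.mem_sdiff, Finset.mem_insert, Finset.mem_erase,
                  Finset.mem_singleton] at hiF ⊢
                tauto
      · intro u hu w hw huw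
        have hu := (aux_mem _ _ _ _ _ _ _ _).1 (Finset.mem_filter.1 (Finset.mem_coe.1 hu)).1
        have hw := (aux_mem _ _ _ _ _ _ _ _).1 (Finset.mem_filter.1 (Finset.mem_coe.1 hw)).1
        have heq : ∀ i, i ≠ j1 → u i = w i := by
          intro i hi
          have := congrFun huw i
          simpa [Function.update_of_ne hi] using this
        have hrj : ∀ i, rt i ≠ j1 := by
          intro i; rcases hrt i with h | h <;> rw [h]
          exacts [hj1.1.symm, hj1.2.2.symm]
        have e1 := hu.2.2
        have e2 := hw.2.2
        rw [← Finset.add_sum_erase _ _ hs] at e1 e2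
        have e3 : ∑ i ∈ s.erase j1, a i * (u i - u (rt i))
            = ∑ i ∈ s.erase j1, a i * (w i - w (rt i)) := by
          refine Finset.sum_congr rfl fun i hi => ?_
          rw [heq i (Finset.ne_of_mem_erase hi), heq _ (hrj i)]
        rw [e3, heq _ (hrj j1), heq i1 hj1.2.1.symm, heq i0 hj1.1.symm] at e1
        have e4 : a j1 * u j1 = a j1 * w j1 := by linarith
        have e5 := mul_left_cancel₀ (ha j1) e4
        funext i
        by_cases hi : i = j1
        · rw [hi, e5]
        · exact heq i hi
    rcases Nat.eq_zero_or_pos A.card with h | h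
    · have : (auxSol a rt i0 i1 j0 A s) = ∅ := by
        rw [Finset.eq_empty_iff_forall_notMem]
        intro x hx
        have := ((aux_mem _ _ _ _ _ _ _ _).1 hx).1 i0 (by simp)
        rw [Finset.card_eq_zero.1 h] at this
        simp at this
      simp [this]
    · exact hsol.trans (Nat.pow_le_pow_right h hFc)
  · simp only [Finset.card_empty, pow_zero]
    rw [Finset.card_le_one]
    intro u hu w hw
    obtain ⟨hu, hu1, hu2⟩ := Finset.mem_filter.1 hu
    obtain ⟨hw, hw1, hw2⟩ := Finset.mem_filter.1 hw
    rw [aux_mem] at hu hw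
    have e1 := hu.2.2
    have e2 := hw.2.2
    simp only [Finset.sum_empty, add_zero, mul_eq_zero, ha, false_or] at e1 e2
    funext i
    by_cases hi0 : i = i0
    · rw [hi0]; linarith
    by_cases hi1 : i = i1
    · rw [hi1]; linarith
    by_cases hij : i = r
    · rw [hij]; linarith
    rw [hu.2.1 i (by simp [hi0, hi1, hij]), hw.2.1 i (by simp [hi0, hi1, hij])]

lemma aux_step {ι : Type*} [Fintype ι] [DecidableEq ι] (a : ι → ℤ) (rt : ι → ι) (i0 i1 j0 : ι)
    (ha : ∀ i, a i ≠ 0) (h01 : i0 ≠ i1) (h0j : i0 ≠ j0) (h1j : i1 ≠ j0)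
    (hrt : ∀ i, rt i = i0 ∨ rt i = j0) (j1 : ι) (hj1 : j1 ≠ i0 ∧ j1 ≠ i1 ∧ j1 ≠ j0)
    (A : Finset ℤ) (s : Finset ι) (k : ι) (hk : k ∉ insert i0 (insert i1 (insert j0 s)))
    (hs1 : i1 ∉ s)
    (hs : j1 ∈ s ∨ (s = ∅ ∧ rt k = j0)) (N : ℕ) (hN : 0 < N)
    (hA : ∀ x ∈ A, x ∈ Finset.Icc (1 : ℤ) N) :
    (auxSol a rt i0 i1 j0 A s).card ^ 2 ≤
      (3 * ((a i1).natAbs + (a k).natAbs) * N) *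
        (N ^ s.card * (auxSol a rt i0 i1 j0 A (insert k s)).card) := by
  simp only [Finset.mem_insert, not_or] at hk
  obtain ⟨hk0, hk1, hkj, hks⟩ := hk
  have hrk : ∀ i, rt i ≠ k := by
    intro i; rcases hrt i with h | h <;> rw [h]
    exacts [Ne.symm hk0, Ne.symm hkj]
  have hr1 : ∀ i, rt i ≠ i1 := by
    intro i; rcases hrt i with h | h <;> rw [h]
    exacts [h01, Ne.symm h1j]
  have hrmem : ∀ i, ∀ t : Finset ι, rt i ∈ insert i0 (insert i1 (insert j0 t)) := by
    intro i t; rcases hrt i with h | h <;> rw [h] <;> simp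
  set S := auxSol a rt i0 i1 j0 A s with hS
  set L : (ι → ℤ) → ℤ := fun u => a i1 * u i1 + a k * u (rt k) with hL
  set M := (a i1).natAbs + (a k).natAbs with hM
  have hMpos : 0 < M := by
    have := Int.natAbs_pos.2 (ha i1)
    omega
  have hAc : A.card ≤ N := by
    have := Finset.card_le_card (fun x hx => hA x hx : A ⊆ Finset.Icc (1 : ℤ) N)
    simpa using this
  have hmap : ∀ u ∈ S, L u ∈ Finset.Icc (-((M * N : ℕ) : ℤ)) ((M * N : ℕ) : ℤ) := by
    intro u hu
    rw [hS, aux_mem] at hu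
    have h1 := Finset.mem_Icc.1 (hA _ (hu.1 i1 (by simp)))
    have h2 := Finset.mem_Icc.1 (hA _ (hu.1 _ (hrmem k s)))
    rw [Finset.mem_Icc, ← abs_le]
    calc |L u| ≤ |a i1 * u i1| + |a k * u (rt k)| := abs_add_le _ _
      _ = |a i1| * |u i1| + |a k| * |u (rt k)| := by rw [abs_mul, abs_mul]
      _ ≤ |a i1| * N + |a k| * N := by
        have g1 : |u i1| ≤ N := abs_le.2 ⟨by linarith, h1.2⟩
        have g2 : |u (rt k)| ≤ N := abs_le.2 ⟨by linarith, h2.2⟩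
        gcongr
      _ = ((M * N : ℕ) : ℤ) := by rw [hM]; push_cast; ring
  have hcs := aux_cs S L _ hmap
  have hB : (Finset.Icc (-((M * N : ℕ) : ℤ)) ((M * N : ℕ) : ℤ)).card ≤ 3 * M * N := by
    rw [Int.card_Icc]
    have : 0 < M * N := Nat.mul_pos hMpos hN
    have h3 : 3 * M * N = 3 * (M * N) := by ring
    rw [h3]
    omega
  refine hcs.trans (Nat.mul_le_mul hB ?_)
  refine Finset.card_le_mul_card_image_of_maps_to
    (f := fun p : (ι → ℤ) × (ι → ℤ) =>
      Function.update (Function.update p.1 i1 (p.2 i1)) k (p.2 (rt k))) ?_ _ ?_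
  · rintro ⟨u, w⟩ hp
    obtain ⟨hp, hLe⟩ := Finset.mem_filter.1 hp
    obtain ⟨hu, hw⟩ := Finset.mem_product.1 hp
    simp only [hS] at hu hw
    rw [aux_mem] at hu hw
    simp only [hL] at hLe
    simp only
    rw [aux_mem]
    refine ⟨?_, ?_, ?_⟩
    · intro i hi
      by_cases hik : i = k
      · subst hik
        rw [Function.update_self]
        exact hw.1 _ (hrmem _ _)
      rw [Function.update_of_ne hik]
      by_cases hi1 : i = i1
      · subst hi1
        rw [Function.update_self]
        exact hw.1 _ (by simp)
      rw [Function.update_of_ne hi1]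
      apply hu.1
      simp only [Finset.mem_insert] at hi ⊢
      tauto
    · intro i hi
      simp only [Finset.mem_insert, not_or] at hi
      rw [Function.update_of_ne hi.2.2.2.1, Function.update_of_ne hi.2.1]
      apply hu.2.1
      simp only [Finset.mem_insert, not_or]
      tauto
    · rw [Finset.sum_insert hks]
      have e : ∑ i ∈ s, a i * (Function.update (Function.update u i1 (w i1)) k (w (rt k)) i -
          Function.update (Function.update u i1 (w i1)) k (w (rt k)) (rt i))
          = ∑ i ∈ s, a i * (u i - u (rt i)) := by
        refine Finset.sum_congr rfl fun i hi => ?_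
        have hik : i ≠ k := fun h => hks (h ▸ hi)
        have hi1 : i ≠ i1 := fun h => hs1 (h ▸ hi)
        rw [Function.update_of_ne hik, Function.update_of_ne hi1,
          Function.update_of_ne (hrk i), Function.update_of_ne (hr1 i)]
      rw [e, Function.update_self, Function.update_of_ne (Ne.symm hk1), Function.update_self,
        Function.update_of_ne (Ne.symm hk0), Function.update_of_ne h01,
        Function.update_of_ne (hrk k), Function.update_of_ne (hr1 k)]
      have := hu.2.2
      linarith
  · intro z hz
    have hfib := aux_fib a rt i0 i1 j0 ha h01 h0j h1j hrt j1 hj1 A s (rt k) (hrt k) hs (z i1) (z k)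
    refine le_trans ?_ (hfib.trans (Nat.pow_le_pow_left hAc _))
    refine Finset.card_le_card_of_injOn Prod.snd ?_ ?_
    · rintro ⟨u, w⟩ hp
      obtain ⟨hp, hz⟩ := Finset.mem_filter.1 (Finset.mem_coe.1 hp)
      obtain ⟨hp, hLe⟩ := Finset.mem_filter.1 hp
      obtain ⟨hu, hw⟩ := Finset.mem_product.1 hp
      refine Finset.mem_coe.2 (Finset.mem_filter.2 ⟨hw, ?_, ?_⟩)
      · rw [← hz]; simp [Function.update_of_ne (Ne.symm hk1)]
      · rw [← hz]; simp
    · rintro ⟨u, w⟩ hp ⟨u', w'⟩ hp' hww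
      simp only at hww
      subst hww
      obtain ⟨hp, hz⟩ := Finset.mem_filter.1 (Finset.mem_coe.1 hp)
      obtain ⟨hp, hLe⟩ := Finset.mem_filter.1 hp
      obtain ⟨hu, hw⟩ := Finset.mem_product.1 hp
      obtain ⟨hp', hz'⟩ := Finset.mem_filter.1 (Finset.mem_coe.1 hp')
      obtain ⟨hp', hLe'⟩ := Finset.mem_filter.1 hp'
      obtain ⟨hu', -⟩ := Finset.mem_product.1 hp'
      simp only at hz hz' hu hu'
      simp only [hL] at hLe hLe'
      have heq : ∀ i, i ≠ k → i ≠ i1 → u i = u' i := by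
        intro i hik hi1
        have := congrFun (hz.trans hz'.symm) i
        simpa [Function.update_of_ne hik, Function.update_of_ne hi1] using this
      have h1 : u i1 = u' i1 := by
        rw [heq _ (hrk k) (hr1 k)] at hLe
        exact mul_left_cancel₀ (ha i1) (by linarith)
      have hk' : k ∉ insert i0 (insert i1 (insert j0 s)) := by
        simp only [Finset.mem_insert, not_or]; exact ⟨hk0, hk1, hkj, hks⟩
      rw [hS, aux_mem] at hu hu'
      have h2 : u k = u' k := by rw [hu.2.1 k hk', hu'.2.1 k hk']
      have : u = u' := by
        funext i
        by_cases hik : i = k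
        · rw [hik, h2]
        by_cases hi1 : i = i1
        · rw [hi1, h1]
        exact heq i hik hi1
      rw [this]

def auxP {ι : Type*} [Fintype ι] [DecidableEq ι] (a : ι → ℤ) (rt : ι → ι) (i0 i1 j0 : ι)
    (s : Finset ι) : Prop :=
  ∃ γ : ℝ, ∃ n : ℕ, 0 < γ ∧ 0 < n ∧ ∀ ε : ℝ, 0 < ε → ε < 1 → ∀ N : ℕ, 0 < N →
      ∀ A : Finset ℤ, (∀ x ∈ A, x ∈ Finset.Icc (1 : ℤ) N) →
        ε * N ≤ (A.card : ℝ) →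
        γ * ε ^ n * (N : ℝ) ^ (s.card + 2) ≤ ((auxSol a rt i0 i1 j0 A s).card : ℝ)

lemma auxP_step {ι : Type*} [Fintype ι] [DecidableEq ι] (a : ι → ℤ) (rt : ι → ι) (i0 i1 j0 : ι)
    (ha : ∀ i, a i ≠ 0) (h01 : i0 ≠ i1) (h0j : i0 ≠ j0) (h1j : i1 ≠ j0)
    (hrt : ∀ i, rt i = i0 ∨ rt i = j0) (j1 : ι) (hj1 : j1 ≠ i0 ∧ j1 ≠ i1 ∧ j1 ≠ j0)
    (s : Finset ι) (k : ι) (hk : k ∉ insert i0 (insert i1 (insert j0 s)))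
    (hs1 : i1 ∉ s)
    (hs : j1 ∈ s ∨ (s = ∅ ∧ rt k = j0)) (hP : auxP a rt i0 i1 j0 s) :
    auxP a rt i0 i1 j0 (insert k s) := by
  obtain ⟨γ, n, hγ, hn, h⟩ := hP
  set K : ℝ := 3 * (((a i1).natAbs + (a k).natAbs : ℕ) : ℝ) with hK
  have hKpos : 0 < K := by
    have := Int.natAbs_pos.2 (ha i1)
    have : 0 < (a i1).natAbs + (a k).natAbs := by omega
    have : (0 : ℝ) < (((a i1).natAbs + (a k).natAbs : ℕ) : ℝ) := by exact_mod_cast this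
    positivity
  refine ⟨γ ^ 2 / K, 2 * n, by positivity, by omega, ?_⟩
  intro ε hε hε1 N hN A hA hAε
  have h1 := h ε hε hε1 N hN A hA hAε
  have h2 := aux_step a rt i0 i1 j0 ha h01 h0j h1j hrt j1 hj1 A s k hk hs1 hs N hN hA
  have hks : k ∉ s := fun h => hk (by simp [h])
  rw [Finset.card_insert_of_notMem hks]
  set X := (auxSol a rt i0 i1 j0 A s).card
  set Y := (auxSol a rt i0 i1 j0 A (insert k s)).card
  have h3 : (X : ℝ) ^ 2 ≤ (K * N) * ((N : ℝ) ^ s.card * Y) := by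
    rw [hK]; exact_mod_cast h2
  have hNr : (0 : ℝ) < N := by exact_mod_cast hN
  have h4 : (γ * ε ^ n * (N : ℝ) ^ (s.card + 2)) ^ 2 ≤ (X : ℝ) ^ 2 := by gcongr
  have h5 := h4.trans h3
  have h6 : 0 < K * (N : ℝ) ^ (s.card + 1) := by positivity
  refine le_of_mul_le_mul_left ?_ h6
  calc K * (N : ℝ) ^ (s.card + 1) * (γ ^ 2 / K * ε ^ (2 * n) * (N : ℝ) ^ (s.card + 1 + 2))
      = (γ * ε ^ n * (N : ℝ) ^ (s.card + 2)) ^ 2 := by field_simp; ring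
    _ ≤ (K * N) * ((N : ℝ) ^ s.card * Y) := h5
    _ = _ := by ring

lemma auxP_empty {ι : Type*} [Fintype ι] [DecidableEq ι] (a : ι → ℤ) (rt : ι → ι) (i0 i1 j0 : ι)
    (h0j : i0 ≠ j0) (h1j : i1 ≠ j0) :
    auxP a rt i0 i1 j0 ∅ := by
  refine ⟨1, 2, one_pos, by omega, ?_⟩
  intro ε hε hε1 N hN A hA hAε
  have h1 : (A ×ˢ A).card ≤ (auxSol a rt i0 i1 j0 A ∅).card := by
    refine Finset.card_le_card_of_injOn
      (fun p i => if i = i0 ∨ i = i1 then p.1 else if i = j0 then p.2 else 0) ?_ ?_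
    · rintro ⟨p, q⟩ hp
      obtain ⟨hp, hq⟩ := Finset.mem_product.1 (Finset.mem_coe.1 hp)
      refine Finset.mem_coe.2 ((aux_mem _ _ _ _ _ _ _ _).2 ⟨?_, ?_, ?_⟩)
      · intro i hi
        simp only [Finset.mem_insert, Finset.notMem_empty, or_false] at hi
        simp only at hp hq ⊢
        split_ifs
        · exact hp
        · exact hq
        · tauto
      · intro i hi
        simp only [Finset.mem_insert, Finset.notMem_empty, or_false, not_or] at hi
        simp [hi]
      · simp
    · rintro ⟨p, q⟩ - ⟨p', q'⟩ - h
      have e1 := congrFun h i0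
      have e2 := congrFun h j0
      simp [h0j.symm, h1j.symm] at e1 e2
      rw [e1, e2]
  rw [Finset.card_product] at h1
  have h2 : (A.card : ℝ) * A.card ≤ (auxSol a rt i0 i1 j0 A ∅).card := by exact_mod_cast h1
  refine le_trans ?_ h2
  calc 1 * ε ^ 2 * (N : ℝ) ^ ((∅ : Finset ι).card + 2) = (ε * N) * (ε * N) := by
        simp; ring
    _ ≤ _ := by gcongr


/-- Every translation-invariant equation of genus at least 2 is abundant:
if `E : a₁x₁ + ⋯ + a_ℓ x_ℓ = 0` has nonzero coefficients summing to zero and genus at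
least 2 (expressed as the existence of a partition of the index set into two nonempty
parts each with zero coefficient sum, which is equivalent), then there are constants
`γ, C > 0` such that for every `ε ∈ (0,1)` and every `N ≥ 1`, every `A ⊆ {1,…,N}` with
`|A| ≥ εN` contains at least `γ·ε^C·N^(ℓ-1)` solutions `(x₁,…,x_ℓ) ∈ A^ℓ` of `E`. -/
theorem stmt_1 (ℓ : ℕ) (a : Fin ℓ → ℤ)
    (ha : ∀ i, a i ≠ 0) (hsum : ∑ i, a i = 0)
    (hgenus : ∃ T : Finset (Fin ℓ), T.Nonempty ∧ Tᶜ.Nonempty ∧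
      ∑ i ∈ T, a i = 0 ∧ ∑ i ∈ Tᶜ, a i = 0) :
    ∃ γ C : ℝ, 0 < γ ∧ 0 < C ∧ ∀ ε : ℝ, 0 < ε → ε < 1 → ∀ N : ℕ, 0 < N →
      ∀ A : Finset ℤ, (∀ x ∈ A, x ∈ Finset.Icc (1 : ℤ) N) →
        ε * N ≤ (A.card : ℝ) →
        γ * ε ^ C * (N : ℝ) ^ (ℓ - 1) ≤
          (((Fintype.piFinset (fun _ : Fin ℓ => A)).filter
            (fun x => ∑ i, a i * x i = 0)).card : ℝ) := by
  classical
  obtain ⟨T, ⟨i0, hi0⟩, ⟨j0, hj0⟩, hT, hTc⟩ := hgenus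
  obtain ⟨i1, hi1, h10⟩ : ∃ i1 ∈ T, i1 ≠ i0 := by
    by_contra! hcon
    have : T = {i0} := by
      ext i; simp only [Finset.mem_singleton]
      exact ⟨hcon i, fun h => h ▸ hi0⟩
    rw [this, Finset.sum_singleton] at hT
    exact ha _ hT
  obtain ⟨j1, hj1, hjj⟩ : ∃ j1 ∈ Tᶜ, j1 ≠ j0 := by
    by_contra! hcon
    have : Tᶜ = {j0} := by
      ext i; simp only [Finset.mem_singleton]
      exact ⟨hcon i, fun h => h ▸ hj0⟩
    rw [this, Finset.sum_singleton] at hTc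
    exact ha _ hTc
  have hne : ∀ i ∈ T, ∀ j ∈ Tᶜ, i ≠ j := by
    rintro i hi j hj rfl
    exact (Finset.mem_compl.1 hj) hi
  set rt : Fin ℓ → Fin ℓ := fun i => if i ∈ T then i0 else j0 with hrtdef
  have hrt : ∀ i, rt i = i0 ∨ rt i = j0 := by
    intro i; simp only [hrtdef]; split_ifs <;> simp
  have h0j := hne i0 hi0 j0 hj0
  have h1j := hne i1 hi1 j0 hj0
  have hj1' : j1 ≠ i0 ∧ j1 ≠ i1 ∧ j1 ≠ j0 :=
    ⟨(hne i0 hi0 j1 hj1).symm, (hne i1 hi1 j1 hj1).symm, hjj⟩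
  have hP0 : auxP a rt i0 i1 j0 ∅ := auxP_empty a rt i0 i1 j0 h0j h1j
  have hrj1 : rt j1 = j0 := by
    simp only [hrtdef]; rw [if_neg (Finset.mem_compl.1 hj1)]
  have hP1 : auxP a rt i0 i1 j0 (insert j1 ∅) :=
    auxP_step a rt i0 i1 j0 ha h10.symm h0j h1j hrt j1 hj1' ∅ j1 (by simp [hj1']) (by simp)
      (Or.inr ⟨rfl, hrj1⟩) hP0
  have hP : ∀ s : Finset (Fin ℓ), (∀ i ∈ s, i ≠ i0 ∧ i ≠ i1 ∧ i ≠ j0 ∧ i ≠ j1) →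
      auxP a rt i0 i1 j0 (insert j1 s) := by
    intro s
    induction s using Finset.induction_on with
    | empty => intro _; exact hP1
    | insert k s hks ih =>
      intro hs
      have hk := hs k (Finset.mem_insert_self _ _)
      rw [Finset.insert_comm]
      refine auxP_step a rt i0 i1 j0 ha h10.symm h0j h1j hrt j1 hj1' _ k ?_ ?_
        (Or.inl (by simp)) (ih fun i hi => hs i (Finset.mem_insert_of_mem hi))
      · simp [hk, hks]
      · simp only [Finset.mem_insert, not_or]
        exact ⟨hj1'.2.1.symm, fun h => (hs i1 (Finset.mem_insert_of_mem h)).2.1 rfl⟩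
  set R : Finset (Fin ℓ) := Finset.univ \ {i0, i1, j0} with hR
  have hRP : auxP a rt i0 i1 j0 R := by
    have h1 : R = insert j1 (R.erase j1) := by
      rw [Finset.insert_erase]; simp [hR, hj1']
    rw [h1]
    apply hP
    intro i hi
    simp only [hR, Finset.mem_erase, Finset.mem_sdiff, Finset.mem_insert, Finset.mem_singleton,
      Finset.mem_univ, true_and, not_or] at hi
    tauto
  have hc3 : ({i0, i1, j0} : Finset (Fin ℓ)).card = 3 :=
    Finset.card_eq_three.2 ⟨i0, i1, j0, h10.symm, h0j, h1j, rfl⟩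
  have hRc : R.card + 2 = ℓ - 1 := by
    have := Finset.card_sdiff_add_card_eq_card (Finset.subset_univ ({i0, i1, j0} : Finset (Fin ℓ)))
    rw [hc3, Finset.card_univ, Fintype.card_fin] at this
    rw [hR]
    omega
  obtain ⟨γ, n, hγ, hn, h⟩ := hRP
  refine ⟨γ, n, hγ, by exact_mod_cast hn, ?_⟩
  intro ε hε hε1 N hN A hA hAε
  have h1 := h ε hε hε1 N hN A hA hAε
  rw [hRc] at h1
  rw [Real.rpow_natCast]
  refine h1.trans ?_
  rw [Nat.cast_le]
  refine Finset.card_le_card ?_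
  intro x hx
  rw [aux_mem] at hx
  obtain ⟨hxA, -, hx⟩ := hx
  have hall : ∀ i, i ∈ insert i0 (insert i1 (insert j0 R)) := by
    intro i
    simp only [hR, Finset.mem_insert, Finset.mem_sdiff, Finset.mem_univ, true_and,
      Finset.mem_singleton]
    tauto
  refine Finset.mem_filter.2 ⟨Fintype.mem_piFinset.2 fun i => hxA i (hall i), ?_⟩
  have hr0 : rt i0 = i0 := by simp [hrtdef, hi0]
  have hr1 : rt i1 = i0 := by simp [hrtdef, hi1]
  have hrj : rt j0 = j0 := by
    simp only [hrtdef]; rw [if_neg (Finset.mem_compl.1 hj0)]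
  have e1 : ∑ i, a i * (x i - x (rt i)) = 0 := by
    rw [← Finset.sum_sdiff (Finset.subset_univ ({i0, i1, j0} : Finset (Fin ℓ)))]
    rw [Finset.sum_insert (by simp [h10.symm, h0j]), Finset.sum_insert (by simp [h1j]),
      Finset.sum_singleton, hr0, hr1, hrj]
    rw [← hx]
    ring
  have e2 : ∑ i, a i * x (rt i) = 0 := by
    rw [← Finset.sum_add_sum_compl T]
    have f1 : ∑ i ∈ T, a i * x (rt i) = (∑ i ∈ T, a i) * x i0 := by
      rw [Finset.sum_mul]
      refine Finset.sum_congr rfl fun i hi => ?_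
      simp only [hrtdef]; rw [if_pos hi]
    have f2 : ∑ i ∈ Tᶜ, a i * x (rt i) = (∑ i ∈ Tᶜ, a i) * x j0 := by
      rw [Finset.sum_mul]
      refine Finset.sum_congr rfl fun i hi => ?_
      simp only [hrtdef]; rw [if_neg (Finset.mem_compl.1 hi)]
    rw [f1, f2, hT, hTc]; ring
  have e3 : ∑ i, a i * x i = ∑ i, a i * (x i - x (rt i)) + ∑ i, a i * x (rt i) := by
    rw [← Finset.sum_add_distrib]
    exact Finset.sum_congr rfl fun i _ => by ring
  rw [e3, e1, e2]; rfl
end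

section
/- Let F and G be graphs such that F has at least one edge and there is no homomorphism from F to G. Then there exists a graph H such that H is F-abundant and there is no homomorphism from H to G. -/
/-- `G` contains a copy of `F`, i.e. a subgraph isomorphic to `F`
(equivalently an injective graph homomorphism from `F`). -/
def ContainsCopy {α β : Type*} (F : SimpleGraph α) (G : SimpleGraph β) : Prop :=
  ∃ f : F →g G, Function.Injective f

/-- The number of copies of `H` in `G`, i.e. the number of subgraphs of `G`
isomorphic to `H`. -/
noncomputable def copyCount {α β : Type*} (H : SimpleGraph α) (G : SimpleGraph β) : ℕ :=
  {G' : G.Subgraph | Nonempty (H ≃g G'.coe)}.ncard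

/-- `G` is `ε`-far from `F`-free: every graph obtained from `G` by deleting fewer than
`ε·|V(G)|²` edges still contains a copy of `F`. -/
def FarFromFree {α β : Type*} (F : SimpleGraph α) (G : SimpleGraph β) (ε : ℝ) : Prop :=
  ∀ G' : SimpleGraph β, G' ≤ G →
    ((G.edgeSet \ G'.edgeSet).ncard : ℝ) < ε * (Nat.card β : ℝ) ^ 2 →
    ContainsCopy F G'

/-- `H` is `F`-abundant: there are constants `c, C > 0` such that for every `ε ∈ (0,1)`
and all sufficiently large `n`, every `n`-vertex graph that is `ε`-far from `F`-free
contains at least `c·ε^C·n^{|V(H)|}` copies of `H`. -/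
def Abundant {α β : Type*} (F : SimpleGraph α) (H : SimpleGraph β) : Prop :=
  ∃ c C : ℝ, 0 < c ∧ 0 < C ∧ ∀ ε : ℝ, 0 < ε → ε < 1 → ∃ n₀ : ℕ, ∀ n : ℕ, n₀ ≤ n →
    ∀ G : SimpleGraph (Fin n), FarFromFree F G ε →
      c * ε ^ C * (n : ℝ) ^ (Nat.card β) ≤ (copyCount H G : ℝ)

namespace AbundAux

open Finset

def Good {U : Type} (F : SimpleGraph U) {n : ℕ} (Γ : SimpleGraph (Fin n))
    (S : Finset (U → Fin n)) : Prop :=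
  (∀ f ∈ S, ∀ u v, F.Adj u v → Γ.Adj (f u) (f v)) ∧
  (∀ f ∈ S, ∀ g ∈ S, ∀ u v, F.Adj u v → f u = g u → f v = g v → f = g)

lemma Good.mono {U : Type} {F : SimpleGraph U} {n : ℕ} {Γ : SimpleGraph (Fin n)}
    {S T : Finset (U → Fin n)} (h : Good F Γ S) (hT : T ⊆ S) : Good F Γ T :=
  ⟨fun f hf => h.1 f (hT hf), fun f hf g hg => h.2 f (hT hf) g (hT hg)⟩

open Classical in
lemma prune {U : Type} [Fintype U] {n : ℕ} (S : Finset (U → Fin n)) (δ : ℝ) (hδ : 0 ≤ δ) :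
    ∃ S' ⊆ S, (S.card : ℝ) - δ * (Fintype.card U * n) ≤ S'.card ∧
      ∀ f ∈ S', ∀ u, δ ≤ ((S'.filter (fun g => g u = f u)).card : ℝ) := by
  let act : Finset (U → Fin n) → Finset (U × Fin n) := fun T =>
    univ.filter (fun p => ∃ f ∈ T, f p.1 = p.2)
  obtain ⟨S', hS', hmax⟩ := Finset.exists_max_image S.powerset
    (fun T => (T.card : ℝ) - δ * (act T).card) ⟨S, by simp⟩
  rw [Finset.mem_powerset] at hS'
  refine ⟨S', hS', ?_, ?_⟩
  · have h1 := hmax S (by simp)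
    have h2 : ((act S).card : ℝ) ≤ Fintype.card U * n := by
      have := Finset.card_le_univ (act S)
      simp only [Fintype.card_prod, Fintype.card_fin] at this
      exact_mod_cast this
    have h3 := mul_le_mul_of_nonneg_left h2 hδ
    have h4 : 0 ≤ δ * (act S').card := by positivity
    linarith
  · intro f hf u
    by_contra hlt
    push Not at hlt
    have h1 := hmax (S'.filter (fun g => ¬ g u = f u)) (by
      rw [Finset.mem_powerset]; exact (Finset.filter_subset _ _).trans hS')
    have h2 := Finset.card_filter_add_card_filter_not (s := S') (fun g => g u = f u)
    have h3 : (act (S'.filter (fun g => ¬ g u = f u))).card + 1 ≤ (act S').card := by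
      have : act (S'.filter (fun g => ¬ g u = f u)) ⊂ act S' := by
        rw [Finset.ssubset_iff_of_subset]
        · refine ⟨(u, f u), ?_, ?_⟩
          · simp only [act, mem_filter, mem_univ, true_and]
            exact ⟨f, hf, rfl⟩
          · simp only [act, mem_filter, mem_univ, true_and]
            rintro ⟨g, hg, hg2⟩
            exact hg.2 hg2
        · intro p hp
          simp only [act, mem_filter, mem_univ, true_and] at hp ⊢
          obtain ⟨g, hg, hg2⟩ := hp
          exact ⟨g, hg.1, hg2⟩
      exact Finset.card_lt_card this
    have h3' : ((act (S'.filter (fun g => ¬ g u = f u))).card : ℝ) + 1 ≤ (act S').card := by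
      exact_mod_cast h3
    have h2' : ((S'.filter (fun g => g u = f u)).card : ℝ)
      + (S'.filter (fun g => ¬ g u = f u)).card = S'.card := by exact_mod_cast h2
    have h4 := mul_le_mul_of_nonneg_left h3' hδ
    linarith

open Classical in
noncomputable def homSet {U W : Type} [Fintype W] (K : SimpleGraph W) (τ : W → U) {n : ℕ}
    (Γ : SimpleGraph (Fin n)) (S : Finset (U → Fin n)) : Finset (W → Fin n) :=
  univ.filter (fun h => (∀ x y, K.Adj x y → Γ.Adj (h x) (h y)) ∧ ∀ x, ∃ f ∈ S, f (τ x) = h x)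

inductive NAdj {U I : Type} (p q : I → U) (W : I → Type) (K : ∀ i, SimpleGraph (W i))
    (τ : ∀ i, W i → U) : (U ⊕ (Σ i, W i)) → (U ⊕ (Σ i, W i)) → Prop
  | inn (i : I) (x y : W i) (h : (K i).Adj x y) : NAdj p q W K τ (.inr ⟨i, x⟩) (.inr ⟨i, y⟩)
  | l (i : I) (x : W i) (h : τ i x = q i) : NAdj p q W K τ (.inl (p i)) (.inr ⟨i, x⟩)
  | r (i : I) (x : W i) (h : τ i x = q i) : NAdj p q W K τ (.inr ⟨i, x⟩) (.inl (p i))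

def NGraph {U I : Type} (p q : I → U) (W : I → Type) (K : ∀ i, SimpleGraph (W i))
    (τ : ∀ i, W i → U) : SimpleGraph (U ⊕ (Σ i, W i)) where
  Adj := NAdj p q W K τ
  symm := by
    refine ⟨?_⟩
    intro a b h
    cases h with
    | inn i x y h => exact .inn i y x h.symm
    | l i x h => exact .r i x h
    | r i x h => exact .l i x h
  loopless := by
    have : ∀ a b, NAdj p q W K τ a b → a ≠ b := by
      intro a b h
      cases h with
      | inn i x y h =>
        intro e
        simp only [Sum.inr.injEq, Sigma.mk.injEq, heq_eq_eq, true_and] at e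
        exact h.ne e
      | l i x h => simp
      | r i x h => simp
    exact ⟨fun a h => this a a h rfl⟩

open Classical in
/-- After pruning: sizes of parts and of restricted families. -/
lemma restrict {U : Type} {F : SimpleGraph U} {n : ℕ} {Γ : SimpleGraph (Fin n)}
    {S : Finset (U → Fin n)} (hS : Good F Γ S) (d : ℝ) (hd : 0 ≤ d)
    (hdeg : ∀ f ∈ S, ∀ u, d ≤ ((S.filter (fun g => g u = f u)).card : ℝ))
    (u v : U) (huv : F.Adj u v) :
    (S.Nonempty → d ≤ ((S.image (fun f => f u)).card : ℝ)) ∧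
    ∀ a ∈ S.image (fun f => f u), d * d ≤ ((S.filter (fun g => Γ.Adj a (g v))).card : ℝ) := by
  constructor
  · rintro ⟨f, hf⟩
    refine (hdeg f hf v).trans ?_
    norm_cast
    apply Finset.card_le_card_of_injOn (fun g => g u)
    · intro g hg
      simp only [coe_filter, Set.mem_ofPred_eq] at hg
      simp only [coe_image]
      exact ⟨g, hg.1, rfl⟩
    · intro g hg g' hg' h
      simp only [coe_filter, Set.mem_ofPred_eq] at hg hg'
      exact hS.2 g hg.1 g' hg'.1 u v huv h (hg.2.trans hg'.2.symm)
  · intro a ha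
    rw [Finset.mem_image] at ha
    obtain ⟨f, hf, rfl⟩ := ha
    have h1 := hdeg f hf u
    set T := S.filter (fun g => g u = f u) with hT
    have h2 : (T.biUnion (fun g => S.filter (fun g' => g' v = g v))).card
        ≤ (S.filter (fun g => Γ.Adj (f u) (g v))).card := by
      apply Finset.card_le_card
      intro g' hg'
      simp only [mem_biUnion, mem_filter, hT] at hg' ⊢
      obtain ⟨g, ⟨hg, hgu⟩, hg', hgv⟩ := hg'
      refine ⟨hg', ?_⟩
      rw [hgv, ← hgu]
      exact hS.1 g hg u v huv
    rw [Finset.card_biUnion] at h2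
    · have h3 : (T.card : ℝ) * d ≤ ∑ g ∈ T, ((S.filter (fun g' => g' v = g v)).card : ℝ) := by
        rw [← nsmul_eq_mul]
        apply Finset.card_nsmul_le_sum
        intro g hg
        exact hdeg g (Finset.mem_filter.1 hg).1 v
      have h4 : (∑ g ∈ T, ((S.filter (fun g' => g' v = g v)).card : ℝ))
        ≤ (S.filter (fun g => Γ.Adj (f u) (g v))).card := by exact_mod_cast h2
      have := mul_le_mul_of_nonneg_right h1 hd
      linarith
    · intro g hg g' hg' hne
      refine Finset.disjoint_left.2 ?_
      intro x hx hx'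
      simp only [mem_filter, mem_coe, hT] at hx hx' hg hg'
      exact hne (hS.2 g hg.1 g' hg'.1 u v huv (hg.2.trans hg'.2.symm) (hx.2.symm.trans hx'.2))

def Abd {U : Type} (F : SimpleGraph U) (W : Type) [Fintype W] (K : SimpleGraph W) (τ : W → U) :
    Prop :=
  ∃ c : ℝ, 0 < c ∧ ∃ C : ℕ, ∀ ε : ℝ, 0 < ε → ∀ (n : ℕ) (Γ : SimpleGraph (Fin n))
    (S : Finset (U → Fin n)), Good F Γ S → ε * (n : ℝ) ^ 2 ≤ S.card →
    c * ε ^ C * (n : ℝ) ^ (Fintype.card W) ≤ (homSet K τ Γ S).card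

open Classical in
lemma step {U I : Type} [Fintype U] [Nonempty U] [Fintype I] (F : SimpleGraph U)
    (hnb : ∀ u, ∃ v, F.Adj u v)
    (p q : I → U) (hpq : ∀ i, F.Adj (p i) (q i)) (W : I → Type) [∀ i, Fintype (W i)]
    (K : ∀ i, SimpleGraph (W i)) (τ : ∀ i, W i → U) (hA : ∀ i, Abd F (W i) (K i) (τ i)) :
    Abd F (U ⊕ (Σ i, W i)) (NGraph p q W K τ) (Sum.elim id (fun z => τ z.1 z.2)) := by
  choose c hc C hC using hA
  set k := Fintype.card U with hk
  have hkpos : 0 < k := Fintype.card_pos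
  have hkR : (0 : ℝ) < k := by exact_mod_cast hkpos
  refine ⟨(∏ i, c i) * (1 / (2 * k)) ^ (k + ∑ i, 2 * C i),
    mul_pos (Finset.prod_pos fun i _ => hc i) (by positivity), k + ∑ i, 2 * C i, ?_⟩
  intro ε hε n Γ S hS hSn
  rcases Nat.eq_zero_or_pos n with rfl | hn
  · simp only [Fintype.card_sum, CharP.cast_eq_zero]
    rw [zero_pow (by omega)]
    simp
  have hnR : (0 : ℝ) < n := by exact_mod_cast hn
  set δ : ℝ := 1 / (2 * k) * ε with hδ
  have hδpos : 0 < δ := by positivity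
  obtain ⟨T, hTS, hTc, hdeg⟩ := prune S (δ * n) (by positivity)
  have hTne : T.Nonempty := by
    rw [← Finset.card_pos]
    have e : δ * n * (k * n) = ε / 2 * (n : ℝ) ^ 2 := by
      rw [hδ]; field_simp
    rw [e] at hTc
    have : 0 < ε / 2 * (n : ℝ) ^ 2 := by positivity
    have : (0 : ℝ) < T.card := by linarith
    exact_mod_cast this
  have hT := hS.mono hTS
  have hdn : 0 ≤ δ * n := by positivity
  let X : U → Finset (Fin n) := fun u => T.image (fun f => f u)
  have hX : ∀ u, δ * n ≤ ((X u).card : ℝ) := by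
    intro u
    obtain ⟨v, huv⟩ := hnb u
    exact (restrict hT (δ * n) hdn hdeg u v huv).1 hTne
  let R : I → Fin n → Finset (U → Fin n) := fun i a => T.filter (fun g => Γ.Adj a (g (q i)))
  have hR : ∀ i, ∀ a ∈ X (p i), c i * (δ ^ 2) ^ C i * (n : ℝ) ^ (Fintype.card (W i)) ≤
      (homSet (K i) (τ i) Γ (R i a)).card := by
    intro i a ha
    apply hC i (δ ^ 2) (by positivity) n Γ _ (hT.mono (Finset.filter_subset _ _))
    have := (restrict hT (δ * n) hdn hdeg _ _ (hpq i)).2 a ha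
    refine le_trans (le_of_eq ?_) this
    ring
  let P : Finset (Σ _ : U → Fin n, ∀ i, W i → Fin n) :=
    (Fintype.piFinset X).sigma
      (fun a => Fintype.piFinset (fun i => homSet (K i) (τ i) Γ (R i (a (p i)))))
  have hP : P.card ≤ (homSet (NGraph p q W K τ)
      (Sum.elim id (fun z => τ z.1 z.2)) Γ S).card := by
    apply Finset.card_le_card_of_injOn
      (fun z => Sum.elim z.1 (fun y : Σ i, W i => z.2 y.1 y.2))
    · rintro ⟨a, h⟩ hz
      simp only [P, coe_sigma, Set.mem_sigma_iff, mem_coe, Fintype.mem_piFinset] at hz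
      obtain ⟨ha, hh⟩ := hz
      simp only [homSet, mem_filter, mem_univ, true_and] at hh
      simp only [homSet, coe_filter, mem_univ, true_and, Set.mem_ofPred_eq]
      have key : ∀ i x, τ i x = q i → Γ.Adj (a (p i)) (h i x) := by
        intro i x hx
        obtain ⟨f, hf, hf2⟩ := (hh i).2 x
        rw [← hf2, hx]
        exact (Finset.mem_filter.1 hf).2
      constructor
      · intro x y hxy
        change NAdj p q W K τ x y at hxy
        cases hxy with
        | inn i x y h' => exact (hh i).1 x y h'
        | l i x h' => exact key i x h'
        | r i x h' => exact (key i x h').symm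
      · rintro (u | ⟨i, x⟩)
        · obtain ⟨f, hf, hf2⟩ := Finset.mem_image.1 (ha u)
          exact ⟨f, hTS hf, hf2⟩
        · obtain ⟨f, hf, hf2⟩ := (hh i).2 x
          exact ⟨f, hTS (Finset.mem_filter.1 hf).1, hf2⟩
    · rintro ⟨a, h⟩ - ⟨a', h'⟩ - e
      have e1 : a = a' := funext fun u => congrFun e (.inl u)
      have e2 : h = h' := funext fun i => funext fun x => congrFun e (.inr ⟨i, x⟩)
      rw [e1, e2]
  have hP' : (P.card : ℝ) ≤ (homSet (NGraph p q W K τ)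
      (Sum.elim id (fun z => τ z.1 z.2)) Γ S).card := by exact_mod_cast hP
  refine le_trans ?_ hP'
  rw [Finset.card_sigma]
  push_cast
  set M : ℝ := ∏ i, (c i * (δ ^ 2) ^ C i * (n : ℝ) ^ (Fintype.card (W i))) with hM
  have hM0 : 0 ≤ M := Finset.prod_nonneg fun i _ => by
    have := hc i
    positivity
  have h1 : ((Fintype.piFinset X).card : ℝ) * M ≤ ∑ a ∈ Fintype.piFinset X,
      ((Fintype.piFinset (fun i => homSet (K i) (τ i) Γ (R i (a (p i))))).card : ℝ) := by
    rw [← nsmul_eq_mul]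
    apply Finset.card_nsmul_le_sum
    intro a ha
    rw [Fintype.mem_piFinset] at ha
    rw [Fintype.card_piFinset]
    push_cast
    apply Finset.prod_le_prod
    · intro i _
      have := hc i
      positivity
    · intro i _
      exact hR i _ (ha _)
  refine le_trans ?_ h1
  have h2 : (δ * n) ^ k ≤ ((Fintype.piFinset X).card : ℝ) := by
    rw [Fintype.card_piFinset]
    push_cast
    rw [hk, ← Finset.card_univ, ← Finset.prod_const]
    exact Finset.prod_le_prod (fun _ _ => hdn) (fun u _ => hX u)
  refine le_trans (le_of_eq ?_) (mul_le_mul_of_nonneg_right h2 hM0)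
  rw [hM, Finset.prod_mul_distrib, Finset.prod_mul_distrib,
    Finset.prod_pow_eq_pow_sum _ (fun i => Fintype.card (W i)),
    Fintype.card_sum, Fintype.card_sigma, ← hk]
  have : ∏ i, (δ ^ 2) ^ C i = δ ^ (∑ i, 2 * C i) := by
    rw [← Finset.prod_pow_eq_pow_sum]
    exact Finset.prod_congr rfl fun i _ => by rw [pow_mul]
  rw [this, mul_assoc (∏ i, c i), ← mul_pow, ← hδ]
  ring

open Classical in
lemma core {U γ : Type} [Fintype U] [Nonempty U] [Fintype γ] (F : SimpleGraph U)
    (G : SimpleGraph γ) (hnb : ∀ u, ∃ v, F.Adj u v) (hFG : IsEmpty (F →g G)) :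
    ∀ (N : ℕ) (L : U → Finset γ), ∑ u, (L u).card = N →
    ∃ (W : Type) (_ : Fintype W) (K : SimpleGraph W) (τ : W → U),
      (∀ φ : W → γ, (∀ x, φ x ∈ L (τ x)) → (∀ x y, K.Adj x y → G.Adj (φ x) (φ y)) → False) ∧
      Abd F W K τ := by
  intro N
  induction N using Nat.strong_induction_on with
  | _ N ih =>
  intro L hL
  let I : Type := {z : U × U × γ // F.Adj z.1 z.2.1 ∧ z.2.2 ∈ L z.2.1}
  let L' : I → U → Finset γ := fun i => Function.update L i.1.2.1 ((L i.1.2.1).erase i.1.2.2)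
  have hlt : ∀ i : I, ∑ u, (L' i u).card < N := by
    rintro ⟨⟨u, v, c⟩, huv, hc⟩
    rw [← hL]
    have hv : (L' ⟨⟨u, v, c⟩, huv, hc⟩ v).card < (L v).card := by
      simp only [L', Function.update_self]
      exact Finset.card_lt_card (Finset.erase_ssubset hc)
    apply Finset.sum_lt_sum
    · intro w _
      by_cases h : w = v
      · subst h; exact hv.le
      · simp [L', Function.update_of_ne h]
    · exact ⟨v, Finset.mem_univ _, hv⟩
  have := fun i => ih _ (hlt i) (L' i) rfl
  choose W fW K τ hcol hA using this
  refine ⟨U ⊕ (Σ i, W i), inferInstance, NGraph (fun i : I => i.1.1) (fun i => i.1.2.1) W K τ,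
    Sum.elim id (fun z => τ z.1 z.2), ?_, step F hnb _ _ (fun i => i.2.1) W K τ hA⟩
  intro φ hφ hadj
  have : ∃ u v, F.Adj u v ∧ ¬ G.Adj (φ (.inl u)) (φ (.inl v)) := by
    by_contra hcon
    push Not at hcon
    exact hFG.false ⟨fun u => φ (.inl u), fun {a b} h => hcon a b h⟩
  obtain ⟨u, v, huv, hnot⟩ := this
  let i : I := ⟨⟨u, v, φ (.inl v)⟩, huv, hφ (.inl v)⟩
  refine hcol i (fun x => φ (.inr ⟨i, x⟩)) ?_ ?_
  · intro x
    have hx : φ (.inr ⟨i, x⟩) ∈ L (τ i x) := hφ (.inr ⟨i, x⟩)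
    by_cases h : τ i x = v
    · have h1 : G.Adj (φ (.inl u)) (φ (.inr ⟨i, x⟩)) := hadj _ _ (NAdj.l i x h)
      rw [h] at hx ⊢
      simp only [L', i, Function.update_self, Finset.mem_erase]
      refine ⟨?_, hx⟩
      intro e
      exact hnot (e ▸ h1)
    · simp only [L', i, Function.update_of_ne h]
      exact hx
  · intro x y hxy
    exact hadj _ _ (NAdj.inn i x y hxy)

open Classical in
lemma farFamily {α : Type*} {k : ℕ} (F : SimpleGraph α) (e : Fin k → α)
    (hedge : ∃ u v, (F.comap e).Adj u v) {n : ℕ} (Γ : SimpleGraph (Fin n)) (ε : ℝ)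
    (hfar : FarFromFree F Γ ε) :
    ∃ S : Finset (Fin k → Fin n), Good (F.comap e) Γ S ∧
      ε * (n : ℝ) ^ 2 ≤ S.card * (k * k) := by
  obtain ⟨S, hS, hmax⟩ := Finset.exists_max_image
    (univ.filter (fun S : Finset (Fin k → Fin n) => Good (F.comap e) Γ S)) Finset.card
    ⟨∅, by simp [Good]⟩
  simp only [mem_filter, mem_univ, true_and] at hS hmax
  refine ⟨S, hS, ?_⟩
  by_contra hlt
  push Not at hlt
  let E : Finset (Sym2 (Fin n)) :=
    (S ×ˢ (univ : Finset (Fin k × Fin k))).image (fun z => s(z.1 z.2.1, z.1 z.2.2))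
  have hE : E.card ≤ S.card * (k * k) := by
    refine Finset.card_image_le.trans ?_
    rw [Finset.card_product]
    simp
  obtain ⟨f, -⟩ := hfar (Γ.deleteEdges E) (SimpleGraph.deleteEdges_le _) (by
    refine lt_of_le_of_lt ?_ (by simpa using hlt)
    have h1 : (Γ.edgeSet \ (Γ.deleteEdges (E : Set (Sym2 (Fin n)))).edgeSet).ncard ≤ E.card := by
      rw [← Set.ncard_coe_finset E]
      apply Set.ncard_le_ncard _ (Finset.finite_toSet E)
      intro x hx
      rw [SimpleGraph.edgeSet_deleteEdges] at hx
      by_contra hxE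
      exact hx.2 ⟨hx.1, hxE⟩
    exact_mod_cast h1.trans hE)
  have hadj : ∀ u v, (F.comap e).Adj u v → (Γ.deleteEdges (E : Set (Sym2 (Fin n)))).Adj
      (f (e u)) (f (e v)) := fun u v h => f.map_adj h
  have hne : ∀ g ∈ S, ∀ u v, (F.comap e).Adj u v → f (e u) = g u → f (e v) = g v → False := by
    intro g hg u v huv h1 h2
    have h3 := hadj u v huv
    rw [SimpleGraph.deleteEdges_adj] at h3
    apply h3.2
    rw [h1, h2]
    simp only [E, Finset.mem_coe, Finset.mem_image]
    exact ⟨(g, (u, v)), by simp [hg], rfl⟩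
  obtain ⟨u₀, v₀, h₀⟩ := hedge
  have hnot : (fun u => f (e u)) ∉ S := fun h => hne _ h u₀ v₀ h₀ rfl rfl
  have := hmax (insert (fun u => f (e u)) S) (by
    constructor
    · intro g hg u v huv
      rcases Finset.mem_insert.1 hg with rfl | hg
      · exact (SimpleGraph.deleteEdges_le _) (hadj u v huv)
      · exact hS.1 g hg u v huv
    · intro g hg g' hg' u v huv h1 h2
      rcases Finset.mem_insert.1 hg with rfl | hg
      · rcases Finset.mem_insert.1 hg' with rfl | hg'
        · rfl
        · exact (hne g' hg' u v huv h1 h2).elim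
      · rcases Finset.mem_insert.1 hg' with rfl | hg'
        · exact (hne g hg u v huv h1.symm h2.symm).elim
        · exact hS.2 g hg g' hg' u v huv h1 h2)
  rw [Finset.card_insert_of_notMem hnot] at this
  omega

open Classical in
lemma nonInj (m n : ℕ) :
    ((univ : Finset (Fin m → Fin n)).filter (fun h => ¬ Function.Injective h)).card
      ≤ m * m * n ^ (m - 1) := by
  have h1 : (univ : Finset (Fin m → Fin n)).filter (fun h => ¬ Function.Injective h) ⊆
      (univ.filter (fun z : Fin m × Fin m => z.1 ≠ z.2)).biUnion
        (fun z => univ.filter (fun h => h z.1 = h z.2)) := by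
    intro h hh
    simp only [mem_filter, mem_univ, true_and, Function.Injective, not_forall] at hh
    obtain ⟨x, y, hxy, hne⟩ := hh
    simp only [mem_biUnion, mem_filter, mem_univ, true_and]
    exact ⟨(x, y), hne, hxy⟩
  refine (Finset.card_le_card h1).trans ?_
  refine (Finset.card_biUnion_le_card_mul _ _ (n ^ (m - 1)) ?_).trans ?_
  · rintro ⟨x, y⟩ hxy
    simp only [mem_filter, mem_univ, true_and] at hxy
    have : ((univ : Finset (Fin m → Fin n)).filter (fun h => h x = h y)).card ≤
        (univ : Finset ({z : Fin m // z ≠ x} → Fin n)).card := by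
      apply Finset.card_le_card_of_injOn (fun h z => h z.1)
      · intro _ _; simp
      · intro h hh h' hh' e
        simp only [coe_filter, mem_univ, true_and, Set.mem_ofPred_eq] at hh hh'
        funext z
        by_cases hz : z = x
        · subst hz
          rw [hh, hh']
          exact congrFun e ⟨y, hxy.symm⟩
        · exact congrFun e ⟨z, hz⟩
    refine this.trans (le_of_eq ?_)
    rw [Finset.card_univ, Fintype.card_fun, Fintype.card_fin, Fintype.card_subtype_compl]
    simp
  · apply Nat.mul_le_mul_right
    refine (Finset.card_le_univ _).trans ?_
    simp

open Classical in
lemma copies {m n : ℕ} (H : SimpleGraph (Fin m)) (Γ : SimpleGraph (Fin n)) :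
    ((univ : Finset (Fin m → Fin n)).filter (fun h => Function.Injective h ∧
      ∀ x y, H.Adj x y → Γ.Adj (h x) (h y))).card ≤ m ^ m * copyCount H Γ := by
  set A := (univ : Finset (Fin m → Fin n)).filter (fun h => Function.Injective h ∧
      ∀ x y, H.Adj x y → Γ.Adj (h x) (h y)) with hA
  let Φ : (Fin m → Fin n) → Γ.Subgraph := fun h =>
    { verts := Set.range h
      Adj := fun a b => Γ.Adj a b ∧ ∃ x y, H.Adj x y ∧ h x = a ∧ h y = b
      adj_sub := fun h => h.1
      edge_vert := by
        rintro a b ⟨-, x, y, -, rfl, -⟩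
        exact ⟨x, rfl⟩
      symm := by
        refine ⟨?_⟩
        rintro a b ⟨h1, x, y, h2, h3, h4⟩
        exact ⟨h1.symm, y, x, h2.symm, h4, h3⟩ }
  have hfin : (Set.univ : Set Γ.Subgraph).Finite := Set.toFinite _
  have h1 : (A.image Φ).card ≤ copyCount H Γ := by
    rw [copyCount, ← Set.ncard_coe_finset]
    apply Set.ncard_le_ncard _ (hfin.subset (Set.subset_univ _))
    intro G' hG'
    simp only [coe_image, Set.mem_image, mem_coe] at hG'
    obtain ⟨h, hh, rfl⟩ := hG'
    simp only [hA, mem_filter, mem_univ, true_and] at hh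
    refine ⟨⟨Equiv.ofInjective h hh.1, ?_⟩⟩
    intro a b
    change (Γ.Adj (h a) (h b) ∧ ∃ x y, H.Adj x y ∧ h x = h a ∧ h y = h b) ↔ H.Adj a b
    constructor
    · rintro ⟨-, x, y, hxy, h1, h2⟩
      rwa [← hh.1 h1, ← hh.1 h2]
    · intro hab
      exact ⟨hh.2 a b hab, a, b, hab, rfl, rfl⟩
  refine (Finset.card_le_mul_card_image (f := Φ) A (m ^ m) ?_).trans
    (Nat.mul_le_mul_left _ h1)
  intro G' hG'
  rw [Finset.mem_image] at hG'
  obtain ⟨h, hh, rfl⟩ := hG'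
  have h2 : (A.filter (fun g => Φ g = Φ h)) ⊆ Fintype.piFinset (fun _ => univ.image h) := by
    intro g hg
    rw [Finset.mem_filter] at hg
    rw [Fintype.mem_piFinset]
    intro x
    have : g x ∈ (Φ g).verts := ⟨x, rfl⟩
    rw [hg.2] at this
    obtain ⟨y, hy⟩ := this
    exact Finset.mem_image.2 ⟨y, mem_univ _, hy⟩
  refine (Finset.card_le_card h2).trans ?_
  rw [Fintype.card_piFinset, Finset.prod_const, Finset.card_univ, Fintype.card_fin]
  apply Nat.pow_le_pow_left
  exact Finset.card_image_le.trans (by simp)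

end AbundAux

open AbundAux Finset Classical in
/-- If `F` has at least one edge and there is no homomorphism from
`F` to `G`, then there is a graph `H` that is `F`-abundant and admits no
homomorphism to `G`. -/
theorem stmt_2 {α γ : Type*} [Fintype α] [Fintype γ]
    (F : SimpleGraph α) (G : SimpleGraph γ)
    (hF : F.edgeSet.Nonempty) (hFG : IsEmpty (F →g G)) :
    ∃ (n : ℕ) (H : SimpleGraph (Fin n)), Abundant F H ∧ IsEmpty (H →g G) := by
  let A := {u : α // ∃ v, F.Adj u v}
  let k := Fintype.card A
  let eA : Fin k ≃ A := (Fintype.equivFin A).symm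
  let e : Fin k → α := fun i => (eA i).1
  let eG : γ ≃ Fin (Fintype.card γ) := Fintype.equivFin γ
  have hnb : ∀ u, ∃ v, (F.comap e).Adj u v := by
    intro u
    obtain ⟨v, hv⟩ := (eA u).2
    refine ⟨eA.symm ⟨v, _, hv.symm⟩, ?_⟩
    simpa [e] using hv
  have hedge : ∃ u v, (F.comap e).Adj u v := by
    obtain ⟨x, hx⟩ := hF
    induction x using Sym2.ind with
    | _ a b =>
      rw [SimpleGraph.mem_edgeSet] at hx
      exact ⟨eA.symm ⟨a, b, hx⟩, hnb _⟩
  obtain ⟨u₀, -⟩ := id hedge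
  have : Nonempty (Fin k) := ⟨u₀⟩
  have hkpos : (0 : ℝ) < k := by
    have : 0 < k := Fin.pos u₀
    exact_mod_cast this
  have hFG' : IsEmpty (F.comap e →g G.comap eG.symm) := by
    refine ⟨fun ψ => hFG.false ?_⟩
    refine ⟨fun a => if h : ∃ v, F.Adj a v then eG.symm (ψ (eA.symm ⟨a, h⟩))
      else eG.symm (ψ u₀), ?_⟩
    intro a b hab
    have ha : ∃ v, F.Adj a v := ⟨b, hab⟩
    have hb : ∃ v, F.Adj b v := ⟨a, hab.symm⟩
    rw [dif_pos ha, dif_pos hb]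
    have : (F.comap e).Adj (eA.symm ⟨a, ha⟩) (eA.symm ⟨b, hb⟩) := by
      simpa [e] using hab
    exact ψ.map_adj this
  obtain ⟨W, fW, K, τ, hcol, c, hc, C, hC⟩ := core (F.comap e) (G.comap eG.symm) hnb hFG' _
    (fun _ => univ) rfl
  let m := Fintype.card W
  let eW : W ≃ Fin m := Fintype.equivFin W
  refine ⟨m, K.comap eW.symm, ?_, ?_⟩
  swap
  · refine ⟨fun ψ => hcol (fun x => eG (ψ (eW x))) (fun x => mem_univ _) ?_⟩
    intro x y hxy
    have : (K.comap eW.symm).Adj (eW x) (eW y) := by simpa using hxy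
    simpa using ψ.map_adj this
  have hmpos : 0 < m := by
    by_contra h0
    have : IsEmpty W := Fintype.card_eq_zero_iff.1 (by omega)
    exact hcol (fun x => isEmptyElim x) (fun x => isEmptyElim x) (fun x => isEmptyElim x)
  have hmR : (0 : ℝ) < m := by exact_mod_cast hmpos
  let c' : ℝ := c * (1 / ((k : ℝ) * k)) ^ C
  have hc' : 0 < c' := by positivity
  refine ⟨c' / 2 / (m : ℝ) ^ m, (C + 1 : ℕ), by positivity, by positivity, ?_⟩
  intro ε hε hε1
  refine ⟨⌈2 * (m * m) / (c' * ε ^ C)⌉₊ + 1, ?_⟩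
  intro n hn Γ hfar
  have hnR : 2 * (m * m) / (c' * ε ^ C) ≤ (n : ℝ) := by
    refine (Nat.le_ceil _).trans ?_
    exact_mod_cast (Nat.le_succ _).trans hn
  rw [div_le_iff₀ (by positivity)] at hnR
  obtain ⟨S, hS, hSn⟩ := farFamily F e hedge Γ ε hfar
  have hcount := hC (ε * (1 / ((k : ℝ) * k))) (by positivity) n Γ S hS (by
    have : ε * (1 / ((k : ℝ) * k)) * (n : ℝ) ^ 2 = (ε * (n : ℝ) ^ 2) / (k * k) := by
      field_simp
    rw [this, div_le_iff₀ (by positivity)]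
    exact hSn)
  set Hm := (univ : Finset (Fin m → Fin n)).filter
    (fun h => ∀ x y, (K.comap eW.symm).Adj x y → Γ.Adj (h x) (h y)) with hHm
  have h1 : (homSet K τ Γ S).card ≤ Hm.card := by
    apply Finset.card_le_card_of_injOn (fun h x => h (eW.symm x))
    · intro h hh
      simp only [homSet, coe_filter, mem_univ, true_and, Set.mem_ofPred_eq] at hh
      simp only [hHm, coe_filter, mem_univ, true_and, Set.mem_ofPred_eq]
      intro x y hxy
      exact hh.1 _ _ hxy
    · intro h _ h' _ heq
      funext x
      simpa using congrFun heq (eW x)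
  have h2 : Hm.card ≤ m ^ m * copyCount (K.comap eW.symm) Γ + m * m * n ^ (m - 1) := by
    rw [← Finset.card_filter_add_card_filter_not (s := Hm) (fun h => Function.Injective h)]
    refine Nat.add_le_add (le_trans (Finset.card_le_card ?_) (copies _ _))
      (le_trans (Finset.card_le_card ?_) (nonInj m n))
    · intro h hh
      simp only [hHm, mem_filter, mem_univ, true_and] at hh ⊢
      exact ⟨hh.2, hh.1⟩
    · intro h hh
      simp only [mem_filter, mem_univ, true_and] at hh ⊢
      exact hh.2
  have h3 : (n : ℝ) ^ m = n * (n : ℝ) ^ (m - 1) := by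
    rw [← pow_succ']; congr 1; omega
  have h4 : ((homSet K τ Γ S).card : ℝ) ≤
      (m : ℝ) ^ m * copyCount (K.comap eW.symm) Γ + m * m * (n : ℝ) ^ (m - 1) := by
    exact_mod_cast h1.trans h2
  have h5 : c * (ε * (1 / ((k : ℝ) * k))) ^ C = c' * ε ^ C := by
    simp only [c', mul_pow]; ring
  rw [h5] at hcount
  have h6 : 2 * (m * m * (n : ℝ) ^ (m - 1)) ≤ c' * ε ^ C * (n : ℝ) ^ m := by
    rw [h3]
    have := mul_le_mul_of_nonneg_right hnR (by positivity : 0 ≤ (n : ℝ) ^ (m - 1))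
    nlinarith [this]
  have hcount' : c' * ε ^ C * (n : ℝ) ^ m ≤ ((homSet K τ Γ S).card : ℝ) := hcount
  have h7 : ε ^ (C + 1) ≤ ε ^ C := pow_le_pow_of_le_one hε.le hε1.le (Nat.le_succ _)
  have h8 : c' * ε ^ (C + 1) * (n : ℝ) ^ m ≤ c' * ε ^ C * (n : ℝ) ^ m := by gcongr
  rw [Real.rpow_natCast, Nat.card_fin]
  have h9 : c' / 2 / (m : ℝ) ^ m * ε ^ (C + 1) * (n : ℝ) ^ m =
      (c' * ε ^ (C + 1) * (n : ℝ) ^ m / 2) / (m : ℝ) ^ m := by ring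
  rw [h9, div_le_iff₀ (by positivity)]
  linarith
end

section
/- Let ℓ be a positive integer and let F and G be graphs such that F has at least one edge and there is no homomorphism from F to G. Then there exists a graph H such that H is F-abundant, H has no cycle of length at most ℓ (girth greater than ℓ), and there is no homomorphism from H to G. -/
section Helpers
open Finset
universe u v w z


set_option maxHeartbeats 2000000 in
open Classical in
lemma tree_aux {E : Type u} [Fintype E] (d : ℕ) :
    ∃ (Y : Type u) (_ : Fintype Y) (τ : E → Y → Y → Prop),
      (∀ (K : Type w) (κ : Y → K) (e : K → E),
        (∀ u v, τ (e (κ u)) u v → κ u ≠ κ v) → d ≤ (univ.image κ).card) ∧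
      ∀ (M : Type v) [Fintype M] [Nonempty M], ∃ c : ℝ, 0 < c ∧ ∃ k : ℕ,
        ∀ (Ω : Type z) [Fintype Ω] (R : E → Ω → Ω → Prop) (N : ℝ), 0 < N →
          (Fintype.card Ω : ℝ) ≤ N →
          (∀ (e : E) (δ : ℝ), 0 < δ → ∀ B : Finset Ω, δ * N ≤ (B.card : ℝ) →
            ∃ T ∈ B, δ ^ 3 / 32 * N ≤ ((B.filter (fun T' => R e T T')).card : ℝ)) →
          ∀ δ : ℝ, 0 < δ → ∀ S : Finset Ω, δ * N ≤ (S.card : ℝ) →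
            c * δ ^ k * N ^ (Fintype.card Y * Fintype.card M) ≤
              (((univ : Finset (Y × M → Ω)).filter (fun f => (∀ p, f p ∈ S) ∧
                ∀ e u v m m', τ e u v → R e (f (u, m)) (f (v, m')))).card : ℝ) := by
  induction d with
  | zero =>
    refine ⟨PEmpty, inferInstance, fun _ _ _ => False, fun K κ e h => Nat.zero_le _, ?_⟩
    intro M _ _
    refine ⟨1, one_pos, 0, ?_⟩
    intro Ω _ R N hN hΩ hs δ hδ S hS
    simp
  | succ d ih =>
    obtain ⟨Y, hY, τ, hR, hC⟩ := ih
    refine ⟨Option (E × Y), inferInstance, fun e a b => match a, b with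
      | none, some (e', y) => e = e'
      | some (e₁, y₁), some (e₂, y₂) => e₁ = e₂ ∧ τ e y₁ y₂
      | _, none => False, ?_, ?_⟩
    · intro K κ e h
      set e0 := e (κ none) with he0
      have h1 := hR K (fun y => κ (some (e0, y))) e (by
        intro u v huv
        exact h (some (e0, u)) (some (e0, v)) ⟨rfl, huv⟩)
      have h2 : κ none ∉ univ.image (fun y => κ (some (e0, y))) := by
        simp only [mem_image, mem_univ, true_and, not_exists]
        intro y hy
        exact h none (some (e0, y)) (by simp [he0]) hy.symm
      have h3 : insert (κ none) (univ.image (fun y => κ (some (e0, y)))) ⊆ univ.image κ := by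
        intro x hx
        simp only [mem_insert, mem_image, mem_univ, true_and] at hx ⊢
        rcases hx with rfl | ⟨y, rfl⟩
        · exact ⟨_, rfl⟩
        · exact ⟨_, rfl⟩
      have h4 := card_le_card h3
      rw [card_insert_of_notMem h2] at h4
      omega
    · intro M _ _
      obtain ⟨c, hc, k, hk⟩ := hC M
      set r := Fintype.card E with hr
      obtain ⟨m, hm⟩ : ∃ m, Fintype.card M = m + 1 :=
        ⟨Fintype.card M - 1, by have := Fintype.card_pos (α := M); omega⟩
      set a : ℝ := (1 / (2 * (r + 1))) ^ 3 / 32 with ha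
      have ha0 : 0 < a := by positivity
      refine ⟨(1 / 2 * (c * a ^ k) ^ r) ^ (m + 1), by positivity, (1 + 3 * k * r) * (m + 1), ?_⟩
      intro Ω _ R N hN hΩ hs δ hδ S hS
      set β : ℝ := δ / (2 * (r + 1)) with hβ
      have hβ0 : 0 < β := by positivity
      set nb : E → Ω → Finset Ω := fun e T => S.filter (fun T' => R e T T') with hnb
      set bad : E → Finset Ω := fun e => S.filter (fun T => ((nb e T).card : ℝ) < β ^ 3 / 32 * N)
        with hbad
      have hbadc : ∀ e, ((bad e).card : ℝ) ≤ β * N := by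
        intro e
        by_contra hcon
        push Not at hcon
        obtain ⟨T, hT, hT2⟩ := hs e β hβ0 (bad e) hcon.le
        have h1 : ((bad e).filter (fun T' => R e T T')).card ≤ (nb e T).card :=
          card_le_card (filter_subset_filter _ (filter_subset _ _))
        have h2 : ((nb e T).card : ℝ) < β ^ 3 / 32 * N := (mem_filter.mp hT).2
        have h3 : (((bad e).filter (fun T' => R e T T')).card : ℝ) ≤ (nb e T).card := by
          exact_mod_cast h1
        linarith
      set good : Finset Ω := S \ univ.biUnion bad with hgood
      have hgoodc : δ / 2 * N ≤ (good.card : ℝ) := by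
        have h1 : S.card ≤ good.card + (univ.biUnion bad).card := by
          have h := le_card_sdiff (univ.biUnion bad) S
          have h' : (S \ univ.biUnion bad).card = good.card := by rw [hgood]
          omega
        have h2 : ((univ.biUnion bad).card : ℝ) ≤ r * (β * N) := by
          calc ((univ.biUnion bad).card : ℝ) ≤ ((∑ e, (bad e).card : ℕ) : ℝ) := by
                exact_mod_cast card_biUnion_le
            _ = ∑ e, ((bad e).card : ℝ) := by push_cast; rfl
            _ ≤ ∑ _e : E, β * N := sum_le_sum (fun e _ => hbadc e)
            _ = r * (β * N) := by simp [hr]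
        have h3 : (r : ℝ) * (β * N) ≤ δ / 2 * N := by
          have : (r : ℝ) * β ≤ δ / 2 := by
            rw [hβ, mul_div_assoc', div_le_div_iff₀ (by positivity) (by positivity)]
            nlinarith
          nlinarith
        have h4 : (S.card : ℝ) ≤ good.card + (univ.biUnion bad).card := by exact_mod_cast h1
        linarith
      have hgoodnb : ∀ T ∈ good, ∀ e, a * δ ^ 3 * N ≤ ((nb e T).card : ℝ) := by
        intro T hT e
        rw [hgood, mem_sdiff] at hT
        have h1 : T ∉ bad e := fun h => hT.2 (mem_biUnion.mpr ⟨e, mem_univ _, h⟩)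
        rw [hbad, mem_filter] at h1
        have h2 : β ^ 3 / 32 * N ≤ ((nb e T).card : ℝ) := by
          by_contra h
          exact h1 ⟨hT.1, not_le.mp h⟩
        convert h2 using 2
        rw [ha, hβ]; field_simp
      -- patterns
      set pat : Finset Ω → Finset (Y × M → Ω) := fun S' =>
        (univ : Finset (Y × M → Ω)).filter (fun f => (∀ p, f p ∈ S') ∧
                ∀ e u v m m', τ e u v → R e (f (u, m)) (f (v, m'))) with hpat
      set y := Fintype.card Y
      have hpatc : ∀ T ∈ good, ∀ e,
          c * (a * δ ^ 3) ^ k * N ^ (y * (m + 1)) ≤ ((pat (nb e T)).card : ℝ) := by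
        intro T hT e
        have := hk Ω R N hN hΩ hs (a * δ ^ 3) (by positivity) (nb e T) (hgoodnb T hT e)
        rw [hm] at this
        exact this
      set GT : Ω → Finset (E → Y × M → Ω) := fun T => Fintype.piFinset (fun e => pat (nb e T))
        with hGT
      have hGTc : ∀ T ∈ good, (c * (a * δ ^ 3) ^ k * N ^ (y * (m + 1))) ^ r ≤ ((GT T).card : ℝ) := by
        intro T hT
        rw [hGT]
        simp only [Fintype.card_piFinset]
        push_cast
        rw [hr, ← card_univ, ← prod_const]
        exact prod_le_prod (fun _ _ => by positivity) (fun e _ => hpatc T hT e)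
      set roots : (E → Y × M → Ω) → Finset Ω := fun g => good.filter (fun T => g ∈ GT T)
        with hroots
      have hsum : ∑ g, ((roots g).card : ℝ) = ∑ T ∈ good, ((GT T).card : ℝ) := by
        have := sum_card_bipartiteAbove_eq_sum_card_bipartiteBelow
          (s := (univ : Finset (E → Y × M → Ω))) (t := good) (fun g T => g ∈ GT T)
        have h2 : ∀ T, (univ.filter (fun g => g ∈ GT T)) = GT T := by
          intro T; ext g; simp
        simp only [bipartiteAbove, bipartiteBelow, h2] at this
        rw [hroots]
        exact_mod_cast this
      have hsum2 : δ / 2 * N * (c * (a * δ ^ 3) ^ k * N ^ (y * (m + 1))) ^ r ≤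
          ∑ g, ((roots g).card : ℝ) := by
        rw [hsum]
        calc _ ≤ (good.card : ℝ) * (c * (a * δ ^ 3) ^ k * N ^ (y * (m + 1))) ^ r := by
              gcongr
          _ = ∑ T ∈ good, (c * (a * δ ^ 3) ^ k * N ^ (y * (m + 1))) ^ r := by simp
          _ ≤ _ := sum_le_sum hGTc
      have hjen := pow_sum_le_card_mul_sum_pow (s := (univ : Finset (E → Y × M → Ω)))
        (f := fun g => ((roots g).card : ℝ)) (fun g _ => by positivity) m
      have hcardU : (((univ : Finset (E → Y × M → Ω)).card : ℕ) : ℝ) ≤ N ^ (y * (m + 1) * r) := by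
        rw [card_univ]
        simp only [Fintype.card_pi, Fintype.card_prod, prod_const, card_univ, hm]
        push_cast
        rw [← pow_mul]
        exact pow_le_pow_left₀ (by positivity) hΩ _
      -- the final map
      set SG : Finset (Σ _ : (E → Y × M → Ω), (M → Ω)) :=
        univ.sigma (fun g => Fintype.piFinset (fun _ => roots g)) with hSG
      have hSGc : (SG.card : ℝ) = ∑ g, ((roots g).card : ℝ) ^ (m + 1) := by
        rw [hSG, card_sigma]
        push_cast
        refine sum_congr rfl (fun g _ => ?_)
        rw [Fintype.card_piFinset]
        simp [hm]
      have key : (1 / 2 * (c * a ^ k) ^ r) ^ (m + 1) * δ ^ ((1 + 3 * k * r) * (m + 1)) *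
          N ^ (Fintype.card (Option (E × Y)) * Fintype.card M) ≤ (SG.card : ℝ) := by
        rw [hSGc, hm, Fintype.card_option, Fintype.card_prod]
        change _ * N ^ ((r * y + 1) * (m + 1)) ≤ _
        have h1 : (δ / 2 * N * (c * (a * δ ^ 3) ^ k * N ^ (y * (m + 1))) ^ r) ^ (m + 1) ≤
            (N ^ (y * (m + 1) * r)) ^ m * ∑ g, ((roots g).card : ℝ) ^ (m + 1) :=
          (pow_le_pow_left₀ (by positivity) hsum2 _).trans (hjen.trans
              (mul_le_mul_of_nonneg_right (pow_le_pow_left₀ (Nat.cast_nonneg _) hcardU m)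
                (sum_nonneg (fun g _ => pow_nonneg (Nat.cast_nonneg _) _))))
        have hP : 0 < (N ^ (y * (m + 1) * r)) ^ m := by positivity
        refine le_of_mul_le_mul_left (le_trans (le_of_eq ?_) h1) hP
        ring
      refine key.trans ?_
      norm_cast
      refine card_le_card_of_injOn (fun x p => match p with
          | (none, m) => x.2 m
          | (some (e, y), m) => x.1 e (y, m)) ?_ ?_
      · rintro ⟨g, t⟩ hx
        simp only [hSG, coe_sigma, coe_univ, Set.mem_sigma_iff, Set.mem_univ, true_and, mem_coe,
          Fintype.mem_piFinset] at hx
        simp only [hroots, mem_filter, hGT, Fintype.mem_piFinset] at hx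
        have m0 : M := Classical.arbitrary M
        have hg := (hx m0).2
        simp only [coe_filter, mem_univ, true_and, Set.mem_setOf_eq]
        refine ⟨?_, ?_⟩
        · rintro ⟨_ | ⟨e, y⟩, m⟩
          · exact (mem_sdiff.mp (hx m).1).1
          · have := hg e
            rw [hpat, mem_filter] at this
            exact (mem_filter.mp (this.2.1 (y, m))).1
        · rintro e (_ | ⟨e₁, y₁⟩) (_ | ⟨e₂, y₂⟩) m m' h
          · exact h.elim
          · have h' : e = e₂ := h
            subst h'
            have := (hx m).2 e
            rw [hpat, mem_filter] at this
            exact (mem_filter.mp (this.2.1 (y₂, m'))).2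
          · exact h.elim
          · obtain ⟨h1, h2⟩ : e₁ = e₂ ∧ τ e y₁ y₂ := h
            subst h1
            have := hg e₁
            rw [hpat, mem_filter] at this
            exact this.2.2 e y₁ y₂ m m' h2
      · rintro ⟨g, t⟩ hx ⟨g', t'⟩ hx' h
        have h1 : g = g' := by
          funext e p
          exact congrFun h (some (e, p.1), p.2)
        have h2 : t = t' := by
          funext m
          exact congrFun h (none, m)
        rw [h1, h2]


lemma cnt_aux {T : Type*} [Fintype T] [DecidableEq T] {K : ℕ} (hK : 0 < K) (D : Finset T)
    (B : Finset (Fin K)) :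
    (((univ : Finset (T → Fin K)).filter (fun ω => ∀ e ∈ D, ω e ∈ B)).card : ℝ) =
      ((B.card : ℝ) / K) ^ D.card * (K : ℝ) ^ Fintype.card T := by
  have h1 : (univ : Finset (T → Fin K)).filter (fun ω => ∀ e ∈ D, ω e ∈ B) =
      Fintype.piFinset (fun e => if e ∈ D then B else univ) := by
    ext ω
    simp only [mem_filter, mem_univ, true_and, Fintype.mem_piFinset]
    refine forall_congr' (fun e => ?_)
    by_cases he : e ∈ D <;> simp [he]
  have hK' : (K : ℝ) ≠ 0 := by positivity
  rw [h1, Fintype.card_piFinset]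
  push_cast
  have h2 : ∀ e : T, (((if e ∈ D then B else univ : Finset (Fin K)).card : ℕ) : ℝ) =
      (if e ∈ D then (B.card : ℝ) / K else 1) * K := by
    intro e
    by_cases he : e ∈ D <;> simp [he]
    field_simp
  simp_rw [h2]
  rw [prod_mul_distrib, prod_ite_mem]
  simp [div_pow]

lemma numeric_aux (h q ℓ : ℕ) (hq : 1 ≤ q) :
    ∃ M : ℕ, 1 ≤ M ∧ 2 * ℓ * h ^ ℓ < M ∧
      (q : ℝ) ^ h * ((h : ℝ) ^ 2 * (M : ℝ) ^ (2 * (ℓ + 1))) * Real.exp (1 - M / (q : ℝ) ^ 2) ≤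
        Real.exp (-1) := by
  have hq0 : (0 : ℝ) < (1 / (q : ℝ) ^ 2) := by positivity
  have h1 : Filter.Tendsto (fun x : ℝ => x ^ (2 * (ℓ + 1)) * Real.exp (-(1 / (q : ℝ) ^ 2) * x))
      Filter.atTop (nhds 0) := by
    have := tendsto_rpow_mul_exp_neg_mul_atTop_nhds_zero ((2 * (ℓ + 1) : ℕ) : ℝ) _ hq0
    simpa only [Real.rpow_natCast] using this
  have h2 := (h1.comp tendsto_natCast_atTop_atTop).const_mul
    ((q : ℝ) ^ h * (h : ℝ) ^ 2 * Real.exp 1)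
  rw [mul_zero] at h2
  have h3 := h2.eventually (gt_mem_nhds (Real.exp_pos (-1)))
  obtain ⟨M, ⟨hM1, hM2⟩, hM3⟩ := ((h3.and (Filter.eventually_gt_atTop (2 * ℓ * h ^ ℓ))).and
    (Filter.eventually_ge_atTop 1)).exists
  refine ⟨M, hM3, hM2, le_trans (le_of_eq ?_) hM1.le⟩
  simp only [Function.comp]
  rw [show (1 - (M : ℝ) / (q : ℝ) ^ 2) = 1 + (-(1 / (q : ℝ) ^ 2) * M) by ring, Real.exp_add]
  ring

open Classical in
lemma sparse_D {V γ : Type*} [Fintype V] [Fintype γ] [Nonempty γ] (H0 : SimpleGraph V)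
    (G : SimpleGraph γ) (hE : IsEmpty (H0 →g G)) (N : ℕ) (φ : V × Fin N → γ) :
    ∃ D : Finset (Sym2 (V × Fin N)), (N : ℝ) ^ 2 / (Fintype.card γ : ℝ) ^ 2 ≤ (D.card : ℝ) ∧
      ∀ e ∈ D, ∃ u v, e = s(u, v) ∧ H0.Adj u.1 v.1 ∧ ¬ G.Adj (φ u) (φ v) := by
  have hmaj : ∀ i : V, ∃ g : γ, (N : ℝ) / Fintype.card γ ≤
      ((univ.filter (fun a : Fin N => φ (i, a) = g)).card : ℝ) := by
    intro i
    have := Fintype.exists_le_card_fiber_of_nsmul_le_card (fun a : Fin N => φ (i, a))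
      (b := (N : ℝ) / Fintype.card γ) (by
        simp only [nsmul_eq_mul, Fintype.card_fin]
        rw [mul_div_cancel₀]
        have := Fintype.card_pos (α := γ)
        positivity)
    exact this
  choose g hg using hmaj
  have hng : ∃ i j, H0.Adj i j ∧ ¬ G.Adj (g i) (g j) := by
    by_contra hcon
    push Not at hcon
    exact hE.false ⟨g, fun {a b} h => hcon a b h⟩
  obtain ⟨i, j, hij, hgij⟩ := hng
  set A := univ.filter (fun a : Fin N => φ (i, a) = g i) with hA
  set B := univ.filter (fun a : Fin N => φ (j, a) = g j) with hB
  refine ⟨(A ×ˢ B).image (fun p => s((i, p.1), (j, p.2))), ?_, ?_⟩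
  · rw [card_image_of_injOn, card_product]
    · push_cast
      rw [← div_pow, sq]
      exact mul_le_mul (hg i) (hg j) (by positivity) (by positivity)
    · rintro ⟨a, b⟩ _ ⟨a', b'⟩ _ h
      simp only [Sym2.eq_iff, Prod.mk.injEq] at h
      rcases h with h | h
      · exact Prod.ext h.1.2 h.2.2
      · exact absurd h.1.1 hij.ne
  · intro e he
    obtain ⟨⟨a, b⟩, hab, rfl⟩ := mem_image.mp he
    rw [mem_product, hA, hB, mem_filter, mem_filter] at hab
    refine ⟨(i, a), (j, b), rfl, hij, ?_⟩
    rw [hab.1.2, hab.2.2]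
    exact hgij

set_option maxHeartbeats 2000000 in
open Classical in
lemma sparse_aux {V γ : Type*} [Fintype V] [Fintype γ] (ℓ : ℕ) (H0 : SimpleGraph V)
    (G : SimpleGraph γ) (hE : IsEmpty (H0 →g G)) :
    ∃ (N : ℕ) (H : SimpleGraph (V × Fin N)), (∀ u v, H.Adj u v → H0.Adj u.1 v.1) ∧
      (∀ (v : V × Fin N) (w : H.Walk v v), w.IsCycle → ℓ < w.length) ∧
      IsEmpty (H →g G) := by
  have hV : Nonempty V := by
    by_contra h
    rw [not_nonempty_iff] at h
    exact hE.false ⟨fun v => h.elim v, fun {a} => h.elim a⟩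
  by_cases hγ : Nonempty γ
  swap
  · rw [not_nonempty_iff] at hγ
    refine ⟨1, ⊥, fun u v h => h.elim, ?_, ⟨fun f => hγ.elim (f (Classical.arbitrary _))⟩⟩
    intro v w hw
    cases w with
    | nil => exact absurd hw (by simp)
    | cons h _ => exact h.elim
  set h := Fintype.card V with hh
  set q := Fintype.card γ with hq
  have hq1 : 1 ≤ q := Fintype.card_pos
  have hh1 : 1 ≤ h := Fintype.card_pos
  obtain ⟨M, hM1, hM2, hM3⟩ := numeric_aux h q ℓ hq1
  set N := M ^ (ℓ + 1) with hN
  set K := M ^ ℓ with hK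
  have hN1 : 1 ≤ N := Nat.one_le_pow _ _ hM1
  have hK1 : 0 < K := Nat.pow_pos hM1
  set W := V × Fin N with hW
  have hWc : Fintype.card W = h * N := by simp [hW, hh]
  have hWne : Nonempty W := ⟨(Classical.arbitrary V, ⟨0, hN1⟩)⟩
  let z : Fin K := ⟨0, hK1⟩
  set T := Sym2 W with hT
  have hsd : ∀ φ : W → γ, ∃ D : Finset T, (N : ℝ) ^ 2 / (q : ℝ) ^ 2 ≤ (D.card : ℝ) ∧
      ∀ e ∈ D, ∃ u v : W, e = s(u, v) ∧ H0.Adj u.1 v.1 ∧ ¬ G.Adj (φ u) (φ v) :=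
    sparse_D H0 G hE N
  choose D hD1 hD2 using hsd
  set tot : ℝ := (K : ℝ) ^ Fintype.card T with htot
  have htot0 : 0 < tot := by positivity
  -- cycles
  let ed : (s : Fin ℓ) → (Fin (s.1 + 1) → W) → Fin (s.1 + 1) → T := fun s c i => s(c i, c (i + 1))
  let cyc : (T → Fin K) → Finset (Σ s : Fin ℓ, (Fin (s.1 + 1) → W)) := fun ω =>
    univ.filter (fun x => Function.Injective (ed x.1 x.2) ∧ ∀ i, ω (ed x.1 x.2 i) = z)
  let bad1 : Finset (T → Fin K) := univ.filter (fun ω => N ≤ (cyc ω).card)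
  let bad2 : Finset (T → Fin K) := univ.filter (fun ω => ∃ (φ : W → γ) (X : Fin N → T),
    ∀ e ∈ D φ \ univ.image X, ω e ∈ univ.erase z)
  have hKR : (0 : ℝ) < K := by exact_mod_cast hK1
  have hNR : (1 : ℝ) ≤ N := by exact_mod_cast hN1
  have hMR : (1 : ℝ) ≤ M := by exact_mod_cast hM1
  have hhR : (1 : ℝ) ≤ h := by exact_mod_cast hh1
  have hNK : (N : ℝ) = M * K := by rw [hN, hK]; push_cast; ring
  have hb1 : (bad1.card : ℝ) < tot / 2 := by
    have e1 : (N : ℝ) * bad1.card ≤ ∑ ω, ((cyc ω).card : ℝ) := by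
      calc (N : ℝ) * bad1.card = ∑ ω ∈ bad1, (N : ℝ) := by simp [mul_comm]
        _ ≤ ∑ ω ∈ bad1, ((cyc ω).card : ℝ) :=
            sum_le_sum (fun ω hω => by exact_mod_cast (mem_filter.mp hω).2)
        _ ≤ _ := sum_le_sum_of_subset_of_nonneg (subset_univ _) (fun _ _ _ => by positivity)
    have e2 : ∑ ω, ((cyc ω).card : ℝ) = ∑ x : (Σ s : Fin ℓ, (Fin (s.1 + 1) → W)),
        ((univ.filter (fun ω : T → Fin K => Function.Injective (ed x.1 x.2) ∧
          ∀ i, ω (ed x.1 x.2 i) = z)).card : ℝ) := by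
      have := sum_card_bipartiteAbove_eq_sum_card_bipartiteBelow
          (s := (univ : Finset (T → Fin K))) (t := univ)
          (fun ω (x : (Σ s : Fin ℓ, (Fin (s.1 + 1) → W))) => Function.Injective (ed x.1 x.2) ∧
            ∀ i, ω (ed x.1 x.2 i) = z)
      simp only [bipartiteAbove, bipartiteBelow] at this
      exact_mod_cast this
    have e3 : ∀ x : (Σ s : Fin ℓ, (Fin (s.1 + 1) → W)),
        ((univ.filter (fun ω : T → Fin K => Function.Injective (ed x.1 x.2) ∧
          ∀ i, ω (ed x.1 x.2 i) = z)).card : ℝ) ≤ (1 / (K : ℝ)) ^ (x.1.1 + 1) * tot := by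
      intro x
      by_cases hinj : Function.Injective (ed x.1 x.2)
      · have := cnt_aux hK1 (univ.image (ed x.1 x.2)) {z}
        rw [card_image_of_injective _ hinj] at this
        simp only [card_singleton, Nat.cast_one, card_univ, Fintype.card_fin] at this
        rw [htot, ← this]
        refine le_of_eq ?_
        congr 2
        ext ω
        simp [hinj]
      · simp only [hinj, false_and, filter_false, card_empty, Nat.cast_zero]
        positivity
    have e4 : ∑ x : (Σ s : Fin ℓ, (Fin (s.1 + 1) → W)), (1 / (K : ℝ)) ^ (x.1.1 + 1) * tot ≤
        ℓ * ((h * M : ℝ) ^ ℓ * tot) := by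
      rw [Fintype.sum_sigma]
      simp only [sum_const, card_univ, Fintype.card_fun, Fintype.card_fin, hWc, nsmul_eq_mul]
      calc _ ≤ ∑ _s : Fin ℓ, ((h * M : ℝ) ^ ℓ * tot) := by
            refine sum_le_sum (fun s _ => ?_)
            rw [← mul_assoc]
            refine mul_le_mul_of_nonneg_right ?_ htot0.le
            push_cast
            rw [← mul_pow, show ((h : ℝ) * N * (1 / K)) = h * M by rw [hNK]; field_simp]
            exact pow_le_pow_right₀ (by nlinarith) s.2
        _ = _ := by simp
    have e5 : (ℓ : ℝ) * ((h * M : ℝ) ^ ℓ * tot) < N * (tot / 2) := by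
      have : (2 : ℝ) * ℓ * h ^ ℓ < M := by exact_mod_cast hM2
      have hKM : (K : ℝ) = (M : ℝ) ^ ℓ := by rw [hK]; push_cast; rfl
      rw [hNK, mul_pow, ← hKM]
      have : (2 : ℝ) * ℓ * h ^ ℓ * (K * tot) < M * (K * tot) :=
        mul_lt_mul_of_pos_right this (by positivity)
      linarith
    have e6 : (N : ℝ) * bad1.card < N * (tot / 2) := by
      calc _ ≤ _ := e1
        _ = _ := e2
        _ ≤ _ := sum_le_sum (fun x _ => e3 x)
        _ ≤ _ := e4
        _ < _ := e5
    exact lt_of_mul_lt_mul_left e6 (by positivity)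
  have hb2 : (bad2.card : ℝ) ≤ tot / 2 := by
    have hKge : (1 : ℝ) ≤ K := by exact_mod_cast hK1
    set x0 : ℝ := 1 - 1 / K with hx0
    have hx00 : 0 ≤ x0 := by
      rw [hx0, sub_nonneg, div_le_one hKR]; exact hKge
    have e1 : bad2 ⊆ (univ : Finset ((W → γ) × (Fin N → T))).biUnion (fun p =>
        univ.filter (fun ω : T → Fin K => ∀ e ∈ D p.1 \ univ.image p.2, ω e ∈ univ.erase z)) := by
      intro ω hω
      obtain ⟨φ, X, hφ⟩ := (mem_filter.mp hω).2
      exact mem_biUnion.mpr ⟨(φ, X), mem_univ _, mem_filter.mpr ⟨mem_univ _, hφ⟩⟩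
    have e2 : ∀ p : (W → γ) × (Fin N → T), ((univ.filter (fun ω : T → Fin K =>
        ∀ e ∈ D p.1 \ univ.image p.2, ω e ∈ univ.erase z)).card : ℝ) ≤
          Real.exp (N * (1 - M / (q : ℝ) ^ 2)) * tot := by
      intro p
      rw [cnt_aux hK1]
      refine mul_le_mul_of_nonneg_right ?_ htot0.le
      rw [card_erase_of_mem (mem_univ _), card_univ, Fintype.card_fin, Nat.cast_sub hK1,
        sub_div, div_self hKR.ne', Nat.cast_one]
      set L := (D p.1 \ univ.image p.2).card with hL
      have hL1 : (N : ℝ) ^ 2 / (q : ℝ) ^ 2 - N ≤ L := by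
        have a1 := le_card_sdiff (univ.image p.2) (D p.1)
        have a2 : (univ.image p.2).card ≤ N := card_image_le.trans (by simp)
        have a3 : (D p.1).card ≤ L + N := by omega
        have a4 : ((D p.1).card : ℝ) ≤ L + N := by exact_mod_cast a3
        have := hD1 p.1
        linarith
      have hL2 : (1 - 1 / (K : ℝ)) ≤ Real.exp (-(1 / K)) := by
        have := Real.add_one_le_exp (-(1 / (K : ℝ)))
        linarith
      calc (1 - 1 / (K : ℝ)) ^ L ≤ Real.exp (-(1 / K)) ^ L := pow_le_pow_left₀ hx00 hL2 _
        _ = Real.exp (L * (-(1 / K))) := by rw [← Real.exp_nat_mul]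
        _ ≤ _ := by
          refine Real.exp_le_exp.mpr ?_
          have b1 : ((N : ℝ) ^ 2 / (q : ℝ) ^ 2 - N) * (1 / K) ≤ L * (1 / K) :=
            mul_le_mul_of_nonneg_right hL1 (by positivity)
          have b2 : ((N : ℝ) ^ 2 / (q : ℝ) ^ 2 - N) * (1 / K) = N * (M / (q : ℝ) ^ 2) - M := by
            rw [hNK]; field_simp
          have b3 : (M : ℝ) ≤ N := by rw [hNK]; nlinarith
          linarith
    have e3 : (bad2.card : ℝ) ≤ ∑ p : (W → γ) × (Fin N → T),
        Real.exp (N * (1 - M / (q : ℝ) ^ 2)) * tot := by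
      calc (bad2.card : ℝ) ≤ ((∑ p : (W → γ) × (Fin N → T), (univ.filter (fun ω : T → Fin K =>
        ∀ e ∈ D p.1 \ univ.image p.2, ω e ∈ univ.erase z)).card : ℕ) : ℝ) := by
            exact_mod_cast (card_le_card e1).trans card_biUnion_le
        _ = ∑ p : (W → γ) × (Fin N → T), ((univ.filter (fun ω : T → Fin K =>
        ∀ e ∈ D p.1 \ univ.image p.2, ω e ∈ univ.erase z)).card : ℝ) := by push_cast; rfl
        _ ≤ _ := sum_le_sum (fun p _ => e2 p)
    have hTc : (Fintype.card T : ℝ) ≤ ((h : ℝ) * N) ^ 2 := by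
      have : Fintype.card T ≤ Fintype.card (W × W) :=
        Fintype.card_le_of_surjective (fun p : W × W => s(p.1, p.2)) (fun e => by
          induction e using Sym2.ind with
          | _ a b => exact ⟨(a, b), rfl⟩)
      rw [Fintype.card_prod, hWc] at this
      rw [sq]
      exact_mod_cast this
    have e4 : ∑ p : (W → γ) × (Fin N → T),
        Real.exp (N * (1 - M / (q : ℝ) ^ 2)) * tot ≤ Real.exp (-1) ^ N * tot := by
      rw [sum_const, card_univ, nsmul_eq_mul, ← mul_assoc]
      refine mul_le_mul_of_nonneg_right ?_ htot0.le
      rw [Fintype.card_prod, Fintype.card_fun, Fintype.card_fun, Fintype.card_fin, hWc,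
        Real.exp_nat_mul]
      push_cast
      refine le_trans ?_ (pow_le_pow_left₀ (by positivity) hM3 N)
      rw [mul_pow, mul_pow]
      refine mul_le_mul_of_nonneg_right ?_ (by positivity)
      rw [← pow_mul]
      refine mul_le_mul_of_nonneg_left ?_ (by positivity)
      refine pow_le_pow_left₀ (by positivity) (hTc.trans (le_of_eq ?_)) N
      rw [hN]; push_cast; ring
    have e5 : Real.exp (-1) ^ N ≤ 1 / 2 := by
      have h1 : Real.exp (-1) ≤ 1 / 2 := by
        have := Real.add_one_le_exp (1 : ℝ)
        rw [Real.exp_neg, one_div]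
        exact inv_anti₀ (by norm_num) (by linarith)
      calc Real.exp (-1) ^ N ≤ Real.exp (-1) ^ 1 :=
            pow_le_pow_of_le_one (Real.exp_pos _).le (by linarith) hN1
        _ ≤ _ := by rw [pow_one]; exact h1
    have e6 : Real.exp (-1) ^ N * tot ≤ 1 / 2 * tot := mul_le_mul_of_nonneg_right e5 htot0.le
    linarith
  obtain ⟨ω, hω⟩ : ∃ ω, ω ∉ bad1 ∪ bad2 := by
    by_contra hcon
    push Not at hcon
    have h1 : (univ : Finset (T → Fin K)) ⊆ bad1 ∪ bad2 := fun ω _ => hcon ω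
    have h2 : (univ : Finset (T → Fin K)).card ≤ bad1.card + bad2.card :=
      (card_le_card h1).trans (card_union_le _ _)
    have h3 : ((univ : Finset (T → Fin K)).card : ℝ) ≤ bad1.card + bad2.card := by exact_mod_cast h2
    have h4 : ((univ : Finset (T → Fin K)).card : ℝ) = tot := by
      rw [card_univ, Fintype.card_fun, Fintype.card_fin, htot]
      push_cast; rfl
    linarith
  rw [mem_union, not_or] at hω
  have hω1 : (cyc ω).card < N := by
    by_contra hcon
    exact hω.1 (mem_filter.mpr ⟨mem_univ _, not_lt.mp hcon⟩)
  have hω2 : ∀ (φ : W → γ) (X : Fin N → T), ∃ e ∈ D φ, e ∉ univ.image X ∧ ω e = z := by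
    intro φ X
    by_contra hcon
    push Not at hcon
    refine hω.2 (mem_filter.mpr ⟨mem_univ _, φ, X, ?_⟩)
    intro e he
    rw [mem_sdiff] at he
    exact mem_erase.mpr ⟨hcon e he.1 he.2, mem_univ _⟩
  obtain ⟨X, hX⟩ : ∃ X : Fin N → T, ∀ x ∈ cyc ω, ed x.1 x.2 0 ∈ univ.image X := by
    set P := (cyc ω).image (fun x => ed x.1 x.2 0) with hP
    have hPc : P.card < N := card_image_le.trans_lt hω1
    have w0 : W := Classical.arbitrary W
    refine ⟨fun i => if hi : i.1 < P.card then (P.equivFin.symm ⟨i.1, hi⟩ : T) else s(w0, w0), ?_⟩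
    intro x hx
    have hxP : ed x.1 x.2 0 ∈ P := mem_image_of_mem _ hx
    refine mem_image.mpr ⟨⟨(P.equivFin ⟨_, hxP⟩).1, (P.equivFin ⟨_, hxP⟩).2.trans hPc⟩,
      mem_univ _, ?_⟩
    simp
  let H : SimpleGraph W :=
    { Adj := fun u v => H0.Adj u.1 v.1 ∧ ω s(u, v) = z ∧ s(u, v) ∉ univ.image X
      symm := ⟨fun u v huv => ⟨huv.1.symm, by rw [Sym2.eq_swap]; exact huv.2⟩⟩
      loopless := ⟨fun u hu => hu.1.ne rfl⟩ }
  refine ⟨N, H, fun u v huv => huv.1, ?_, ⟨fun φ => ?_⟩⟩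
  · intro v w hw
    by_contra hlen
    push Not at hlen
    have h3 := hw.three_le_length
    obtain ⟨s, hs⟩ : ∃ s, w.length = s + 1 := ⟨w.length - 1, by omega⟩
    have hsl : s < ℓ := by omega
    let c : Fin (s + 1) → W := fun i => w.getVert i.1
    have hc : ∀ i : Fin (s + 1), s(c i, c (i + 1)) = s(w.getVert i.1, w.getVert (i.1 + 1)) := by
      intro i
      congr 2
      simp only [c]
      rw [Fin.val_add_one]
      split_ifs with hi
      · subst hi
        simp [← hs]
      · rfl
    have hmem : (⟨⟨s, hsl⟩, c⟩ : Σ s : Fin ℓ, (Fin (s.1 + 1) → W)) ∈ cyc ω := by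
      refine mem_filter.mpr ⟨mem_univ _, ?_, ?_⟩
      · intro i j hij
        change s(c i, c (i + 1)) = s(c j, c (j + 1)) at hij
        rw [hc, hc] at hij
        have hi : i.1 < w.edges.length := by rw [w.length_edges, hs]; exact i.2
        have hj : j.1 < w.edges.length := by rw [w.length_edges, hs]; exact j.2
        rw [← w.getElem_edges hi, ← w.getElem_edges hj] at hij
        exact Fin.ext ((hw.isTrail.edges_nodup.getElem_inj_iff).mp hij)
      · intro i
        change ω s(c i, c (i + 1)) = z
        rw [hc]
        exact (w.adj_getVert_succ (by rw [hs]; exact i.2)).2.1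
    have h5 := hX _ hmem
    change s(c 0, c (0 + 1)) ∈ _ at h5
    rw [hc] at h5
    exact (w.adj_getVert_succ (i := 0) (by omega)).2.2 h5
  · obtain ⟨e, he1, he2, he3⟩ := hω2 φ X
    obtain ⟨u, v, rfl, huv, hn⟩ := hD2 φ e he1
    exact hn (φ.map_rel (show H.Adj u v from ⟨huv, he3, he2⟩))

open Classical in
lemma packing_aux {α : Type*} [Fintype α] (F : SimpleGraph α) {i0 j0 : α} (hF : F.Adj i0 j0)
    {n : ℕ} (Γ : SimpleGraph (Fin n)) (ε : ℝ) (hfar : FarFromFree F Γ ε) :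
    ∃ 𝒯 : Finset (α → Fin n), (∀ T ∈ 𝒯, ∀ i j, F.Adj i j → Γ.Adj (T i) (T j)) ∧
      (∀ T ∈ 𝒯, ∀ T' ∈ 𝒯, ∀ i j, F.Adj i j → T i = T' i → T j = T' j → T = T') ∧
      ε * (n : ℝ) ^ 2 ≤ (Fintype.card α : ℝ) ^ 2 * (𝒯.card : ℝ) := by
  set P : Finset (α → Fin n) → Prop := fun 𝒯 =>
    (∀ T ∈ 𝒯, ∀ i j, F.Adj i j → Γ.Adj (T i) (T j)) ∧
    (∀ T ∈ 𝒯, ∀ T' ∈ 𝒯, T ≠ T' → ∀ i j i' j', F.Adj i j → F.Adj i' j' →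
      s(T i, T j) ≠ s(T' i', T' j')) with hP
  obtain ⟨𝒯, h𝒯, hmax⟩ := exists_max_image ((univ : Finset (Finset (α → Fin n))).filter P) card
    ⟨∅, mem_filter.mpr ⟨mem_univ _, by simp [hP]⟩⟩
  have hP𝒯 := (mem_filter.mp h𝒯).2
  refine ⟨𝒯, hP𝒯.1, ?_, ?_⟩
  · intro T hT T' hT' i j hij h1 h2
    by_contra hne
    exact hP𝒯.2 T hT T' hT' hne i j i j hij hij (by rw [h1, h2])
  · by_contra hcon
    push Not at hcon
    set X : Finset (Sym2 (Fin n)) := 𝒯.biUnion (fun T =>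
      ((univ : Finset (α × α)).filter (fun p => F.Adj p.1 p.2)).image (fun p => s(T p.1, T p.2)))
      with hX
    have hXc : (X.card : ℝ) ≤ (Fintype.card α : ℝ) ^ 2 * (𝒯.card : ℝ) := by
      have : X.card ≤ 𝒯.card * (Fintype.card α ^ 2) := by
        refine card_biUnion_le_card_mul _ _ _ (fun T _ => ?_)
        refine card_image_le.trans ((card_filter_le _ _).trans ?_)
        rw [card_univ, Fintype.card_prod, sq]
      rw [mul_comm]
      exact_mod_cast this
    have hmemX : ∀ T ∈ 𝒯, ∀ i j, F.Adj i j → s(T i, T j) ∈ X := by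
      intro T hT i j hij
      exact mem_biUnion.mpr ⟨T, hT, mem_image.mpr ⟨(i, j), mem_filter.mpr ⟨mem_univ _, hij⟩, rfl⟩⟩
    obtain ⟨f, hf⟩ := hfar (Γ.deleteEdges X) (Γ.deleteEdges_le _) (by
      rw [Nat.card_fin]
      refine lt_of_le_of_lt ?_ hcon
      refine le_trans ?_ hXc
      have h1 : Γ.edgeSet \ (Γ.deleteEdges (X : Set (Sym2 (Fin n)))).edgeSet ⊆ X := by
        intro e he
        rw [SimpleGraph.edgeSet_deleteEdges] at he
        by_contra hx
        exact he.2 ⟨he.1, hx⟩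
      have h2 := Set.ncard_le_ncard h1 (Finset.finite_toSet X)
      rw [Set.ncard_coe_finset] at h2
      exact_mod_cast h2)
    have hfadj : ∀ i j, F.Adj i j → Γ.Adj (f i) (f j) ∧ s(f i, f j) ∉ X := by
      intro i j hij
      have := f.map_rel hij
      rw [SimpleGraph.deleteEdges_adj] at this
      exact ⟨this.1, fun h => this.2 (by exact_mod_cast h)⟩
    have hfn : (f : α → Fin n) ∉ 𝒯 := fun h => (hfadj _ _ hF).2 (hmemX _ h _ _ hF)
    have hins : P (insert (f : α → Fin n) 𝒯) := by
      refine ⟨?_, ?_⟩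
      · intro T hT i j hij
        rcases mem_insert.mp hT with rfl | hT
        · exact (hfadj _ _ hij).1
        · exact hP𝒯.1 T hT i j hij
      · intro T hT T' hT' hne i j i' j' hij hij' h
        rcases mem_insert.mp hT with h1 | h1 <;> rcases mem_insert.mp hT' with h2 | h2
        · exact hne (h1.trans h2.symm)
        · subst h1
          exact (hfadj _ _ hij).2 (h ▸ hmemX _ h2 _ _ hij')
        · subst h2
          exact (hfadj _ _ hij').2 (h ▸ hmemX _ h1 _ _ hij)
        · exact hP𝒯.2 T h1 T' h2 hne i j i' j' hij hij' h
    have := hmax _ (mem_filter.mpr ⟨mem_univ _, hins⟩)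
    rw [card_insert_of_notMem hfn] at this
    omega

open Classical in
lemma low_aux {Ω : Type*} {n : ℕ} (a : Ω → Fin n) (B : Finset Ω) (t : ℝ) (ht : 0 ≤ t) :
    ((B.filter (fun T => ((B.filter (fun T' => a T' = a T)).card : ℝ) < t)).card : ℝ) ≤ n * t := by
  set L := B.filter (fun T => ((B.filter (fun T' => a T' = a T)).card : ℝ) < t) with hL
  have h1 : L.card = ∑ v : Fin n, (L.filter (fun T => a T = v)).card :=
    card_eq_sum_card_fiberwise (fun _ _ => mem_univ _)
  rw [h1]
  push_cast
  calc _ ≤ ∑ _v : Fin n, t := by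
        refine sum_le_sum (fun v _ => ?_)
        rcases (L.filter (fun T => a T = v)).eq_empty_or_nonempty with h | ⟨T, hT⟩
        · rw [h]; simpa using ht
        · rw [mem_filter] at hT
          obtain ⟨hT1, rfl⟩ := hT
          have h2 := (mem_filter.mp hT1).2
          refine le_trans ?_ h2.le
          exact_mod_cast card_le_card (filter_subset_filter _ (filter_subset _ _))
    _ = n * t := by simp

open Classical in
lemma star_aux {Ω : Type*} {n : ℕ} (hn : 0 < n) (Γ : SimpleGraph (Fin n)) (a b : Ω → Fin n)
    (hadj : ∀ T, Γ.Adj (a T) (b T)) (hinj : ∀ T T', a T = a T' → b T = b T' → T = T')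
    (δ : ℝ) (hδ : 0 < δ) (B : Finset Ω) (hB : δ * (n : ℝ) ^ 2 ≤ (B.card : ℝ)) :
    ∃ T ∈ B, δ ^ 3 / 32 * (n : ℝ) ^ 2 ≤
      ((B.filter (fun T' => Γ.Adj (a T) (b T'))).card : ℝ) := by
  have hnR : (0 : ℝ) < n := by exact_mod_cast hn
  set t : ℝ := δ * n / 4 with ht
  have ht0 : 0 < t := by positivity
  set fa : Ω → Finset Ω := fun T => B.filter (fun T' => a T' = a T) with hfa
  set fb : Ω → Finset Ω := fun T => B.filter (fun T' => b T' = b T) with hfb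
  have hla : ((B.filter (fun T => ((fa T).card : ℝ) < t)).card : ℝ) ≤ n * t :=
    low_aux a B t ht0.le
  have hlb : ((B.filter (fun T => ((fb T).card : ℝ) < t)).card : ℝ) ≤ n * t :=
    low_aux b B t ht0.le
  set mid := B.filter (fun T => t ≤ ((fa T).card : ℝ) ∧ t ≤ ((fb T).card : ℝ)) with hmid
  have hmidc : δ * (n : ℝ) ^ 2 / 2 ≤ (mid.card : ℝ) := by
    have h1 : B ⊆ mid ∪ (B.filter (fun T => ((fa T).card : ℝ) < t) ∪
        B.filter (fun T => ((fb T).card : ℝ) < t)) := by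
      intro T hT
      simp only [mem_union, hmid, mem_filter, hT, true_and]
      by_cases h1 : t ≤ ((fa T).card : ℝ)
      · by_cases h2 : t ≤ ((fb T).card : ℝ)
        · exact Or.inl ⟨h1, h2⟩
        · exact Or.inr (Or.inr (not_le.mp h2))
      · exact Or.inr (Or.inl (not_le.mp h1))
    have h2 := (card_le_card h1).trans ((card_union_le _ _).trans
      (Nat.add_le_add_left (card_union_le _ _) _))
    have h3 : (B.card : ℝ) ≤ mid.card + ((B.filter (fun T => ((fa T).card : ℝ) < t)).card +
        (B.filter (fun T => ((fb T).card : ℝ) < t)).card) := by exact_mod_cast h2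
    have h4 : n * t = δ * (n : ℝ) ^ 2 / 4 := by rw [ht]; ring
    linarith
  have hBpos : (0 : ℝ) < B.card := lt_of_lt_of_le (by positivity) hB
  have hBn : (B.card : ℝ) ≤ (n : ℝ) ^ 2 := by
    have : B.card ≤ (univ : Finset (Fin n × Fin n)).card :=
      card_le_card_of_injOn (fun T => (a T, b T)) (fun _ _ => mem_coe.mpr (mem_univ _))
        (fun T _ T' _ h => hinj T T' (congrArg Prod.fst h) (congrArg Prod.snd h))
    rw [card_univ, Fintype.card_prod, Fintype.card_fin, ← sq] at this
    exact_mod_cast this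
  set deg : Ω → Finset Ω := fun T => B.filter (fun T' => Γ.Adj (a T) (b T')) with hdeg
  have hcount : (mid.sigma (fun T => fa T ×ˢ fb T)).card ≤ (B.sigma deg).card := by
    refine card_le_card_of_injOn (fun x => ⟨x.2.1, x.2.2⟩) ?_ ?_
    · rintro ⟨T, T1, T2⟩ hx
      simp only [coe_sigma, Set.mem_sigma_iff, mem_coe, mem_product, hfa, hfb, mem_filter] at hx
      simp only [coe_sigma, Set.mem_sigma_iff, mem_coe, hdeg, mem_filter]
      refine ⟨hx.2.1.1, hx.2.2.1, ?_⟩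
      rw [hx.2.1.2, hx.2.2.2]
      exact hadj T
    · rintro ⟨T, T1, T2⟩ hx ⟨T', T1', T2'⟩ hx' h
      simp only [coe_sigma, Set.mem_sigma_iff, mem_coe, mem_product, hfa, hfb, mem_filter] at hx hx'
      simp only [Sigma.mk.injEq, heq_eq_eq] at h
      obtain ⟨rfl, rfl⟩ := h
      have : T = T' := hinj _ _ (hx.2.1.2.symm.trans hx'.2.1.2) (hx.2.2.2.symm.trans hx'.2.2.2)
      rw [this]
  rw [card_sigma, card_sigma] at hcount
  have hcount' : ∑ T ∈ mid, ((fa T).card : ℝ) * (fb T).card ≤ ∑ T ∈ B, ((deg T).card : ℝ) := by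
    simp only [card_product] at hcount
    exact_mod_cast hcount
  have hlow : δ ^ 3 / 32 * (n : ℝ) ^ 4 ≤ ∑ T ∈ mid, ((fa T).card : ℝ) * (fb T).card := by
    calc δ ^ 3 / 32 * (n : ℝ) ^ 4 = δ * (n : ℝ) ^ 2 / 2 * (t * t) := by rw [ht]; ring
      _ ≤ mid.card * (t * t) := mul_le_mul_of_nonneg_right hmidc (by positivity)
      _ = ∑ T ∈ mid, t * t := by simp
      _ ≤ _ := sum_le_sum (fun T hT => by
        have := (mem_filter.mp hT).2
        exact mul_le_mul this.1 this.2 ht0.le (by positivity))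
  by_contra hcon
  push Not at hcon
  have hBne : B.Nonempty := card_pos.mp (by exact_mod_cast hBpos)
  have h1 : ∑ T ∈ B, ((deg T).card : ℝ) < ∑ T ∈ B, δ ^ 3 / 32 * (n : ℝ) ^ 2 :=
    sum_lt_sum_of_nonempty hBne (fun T hT => hcon T hT)
  rw [sum_const, nsmul_eq_mul] at h1
  have h2 : (B.card : ℝ) * (δ ^ 3 / 32 * (n : ℝ) ^ 2) ≤
      (n : ℝ) ^ 2 * (δ ^ 3 / 32 * (n : ℝ) ^ 2) :=
    mul_le_mul_of_nonneg_right hBn (by positivity)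
  nlinarith

open Classical in
lemma copies_aux {β : Type*} [Fintype β] (H : SimpleGraph β) {n : ℕ} (Γ : SimpleGraph (Fin n)) :
    n * ((univ : Finset (β → Fin n)).filter (fun f => ∀ u v, H.Adj u v → Γ.Adj (f u) (f v))).card ≤
      n * (Fintype.card β ^ Fintype.card β * copyCount H Γ) +
        Fintype.card β ^ 2 * n ^ Fintype.card β := by
  set A := (univ : Finset (β → Fin n)).filter (fun f => ∀ u v, H.Adj u v → Γ.Adj (f u) (f v))
    with hA
  set I := A.filter (fun f => Function.Injective f) with hI
  set Z := (univ : Finset (β × β)).filter (fun p => p.1 ≠ p.2) with hZ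
  set J : β × β → Finset (β → Fin n) := fun p => univ.filter (fun f => f p.1 = f p.2) with hJ
  have h1 : A ⊆ I ∪ Z.biUnion J := by
    intro f hf
    by_cases h : Function.Injective f
    · exact mem_union_left _ (mem_filter.mpr ⟨hf, h⟩)
    · refine mem_union_right _ ?_
      unfold Function.Injective at h
      push Not at h
      obtain ⟨x, y, hxy, hne⟩ := h
      exact mem_biUnion.mpr ⟨(x, y), mem_filter.mpr ⟨mem_univ _, hne⟩,
        mem_filter.mpr ⟨mem_univ _, hxy⟩⟩
  have hJc : ∀ p ∈ Z, n * (J p).card ≤ n ^ Fintype.card β := by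
    intro p hp
    have hp' : p.1 ≠ p.2 := (mem_filter.mp hp).2
    have : ((univ : Finset (Fin n)) ×ˢ (J p)).card ≤ (univ : Finset (β → Fin n)).card := by
      refine card_le_card_of_injOn (fun x => Function.update x.2 p.1 x.1)
        (fun _ _ => mem_coe.mpr (mem_univ _)) ?_
      rintro ⟨k, f⟩ hf ⟨k', f'⟩ hf' h
      have hf1 : f p.1 = f p.2 := by
        have := (mem_product.mp (mem_coe.mp hf)).2
        exact (mem_filter.mp this).2
      have hf1' : f' p.1 = f' p.2 := by
        have := (mem_product.mp (mem_coe.mp hf')).2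
        exact (mem_filter.mp this).2
      have hk : k = k' := by
        have := congrFun h p.1
        simpa using this
      have hoff : ∀ x, x ≠ p.1 → f x = f' x := by
        intro x hx
        have := congrFun h x
        simpa [hx] using this
      have hff : f = f' := by
        funext x
        by_cases hx : x = p.1
        · rw [hx, hf1, hf1']; exact hoff _ hp'.symm
        · exact hoff x hx
      rw [hk, hff]
    rw [card_product, card_univ, card_univ, Fintype.card_fin, Fintype.card_fun,
      Fintype.card_fin] at this
    exact this
  have hZJ : n * (Z.biUnion J).card ≤ Fintype.card β ^ 2 * n ^ Fintype.card β := by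
    calc n * (Z.biUnion J).card ≤ n * ∑ p ∈ Z, (J p).card := Nat.mul_le_mul_left _ card_biUnion_le
      _ = ∑ p ∈ Z, n * (J p).card := mul_sum _ _ _
      _ ≤ ∑ p ∈ Z, n ^ Fintype.card β := sum_le_sum hJc
      _ = Z.card * n ^ Fintype.card β := by simp
      _ ≤ _ := by
        refine Nat.mul_le_mul_right _ ((card_filter_le _ _).trans ?_)
        rw [card_univ, Fintype.card_prod, sq]
  have hIc : I.card ≤ Fintype.card β ^ Fintype.card β * copyCount H Γ := by
    let sub : (β → Fin n) → Γ.Subgraph := fun f =>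
      if hf : (∀ u v, H.Adj u v → Γ.Adj (f u) (f v)) ∧ Function.Injective f then
        (SimpleGraph.Copy.mk (⟨f, fun {a b} h => hf.1 a b h⟩ : H →g Γ) hf.2).toSubgraph else ⊥
    have hsub : ∀ f ∈ I, ∃ cp : SimpleGraph.Copy H Γ, (⇑cp : β → Fin n) = f ∧
        sub f = cp.toSubgraph := by
      intro f hf
      have h1 := mem_filter.mp hf
      have h2 := (mem_filter.mp h1.1).2
      refine ⟨SimpleGraph.Copy.mk (⟨f, fun {a b} h => h2 a b h⟩ : H →g Γ) h1.2, rfl, ?_⟩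
      simp only [sub]
      rw [dif_pos ⟨h2, h1.2⟩]
    have h1 : (I.image sub).card ≤ copyCount H Γ := by
      rw [← Set.ncard_coe_finset]
      refine Set.ncard_le_ncard ?_ (Set.toFinite _)
      intro G' hG'
      obtain ⟨f, hf, rfl⟩ := mem_image.mp (mem_coe.mp hG')
      obtain ⟨cp, -, h⟩ := hsub f hf
      rw [h]
      exact ⟨cp.isoToSubgraph⟩
    refine (card_le_mul_card_image (f := sub) I (Fintype.card β ^ Fintype.card β) ?_).trans
      (Nat.mul_le_mul_left _ h1)
    intro G' hG'
    obtain ⟨f, hf, rfl⟩ := mem_image.mp hG'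
    have hverts : ∀ g ∈ I, ((sub g).verts : Set (Fin n)) = Set.range g := by
      intro g hg
      obtain ⟨cp, h1, h2⟩ := hsub g hg
      rw [h2, ← h1]
      ext x
      simp [SimpleGraph.Copy.toSubgraph]
    have hss : I.filter (fun g => sub g = sub f) ⊆ Fintype.piFinset (fun _ : β => univ.image f) := by
      intro g hg
      rw [mem_filter] at hg
      rw [Fintype.mem_piFinset]
      intro x
      have : g x ∈ (sub g).verts := by rw [hverts g hg.1]; exact ⟨x, rfl⟩
      rw [hg.2, hverts f hf] at this
      obtain ⟨y, hy⟩ := this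
      exact mem_image.mpr ⟨y, mem_univ _, hy⟩
    refine (card_le_card hss).trans ?_
    rw [Fintype.card_piFinset, prod_const, card_univ]
    exact Nat.pow_le_pow_left (card_image_le.trans (by rw [card_univ])) _
  calc n * A.card ≤ n * (I.card + (Z.biUnion J).card) :=
        Nat.mul_le_mul_left _ ((card_le_card h1).trans (card_union_le _ _))
    _ = n * I.card + n * (Z.biUnion J).card := by ring
    _ ≤ _ := Nat.add_le_add (Nat.mul_le_mul_left _ hIc) hZJ

open Classical in
lemma nohom_aux {α : Type u} {γ : Type v} {Y : Type w} [Fintype α] [Fintype γ] [Fintype Y]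
    (F : SimpleGraph α) (G : SimpleGraph γ) (hFG : IsEmpty (F →g G))
    (τ : {p : α × α // F.Adj p.1 p.2} → Y → Y → Prop)
    (hτ : ∀ (κ : Y → (α → γ)) (e : (α → γ) → {p : α × α // F.Adj p.1 p.2}),
      (∀ u v, τ (e (κ u)) u v → κ u ≠ κ v) → Fintype.card (α → γ) + 1 ≤ (univ.image κ).card)
    (H0 : SimpleGraph (Y × α))
    (hH0 : ∀ e u v, τ e u v → H0.Adj (u, e.1.1) (v, e.1.2)) : IsEmpty (H0 →g G) := by
  constructor
  intro φ
  have hch : ∀ g : α → γ, ∃ e : {p : α × α // F.Adj p.1 p.2}, ¬ G.Adj (g e.1.1) (g e.1.2) := by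
    intro g
    by_contra hcon
    push Not at hcon
    exact hFG.false ⟨g, fun {a b} h => hcon ⟨(a, b), h⟩⟩
  choose e he using hch
  have h := hτ (fun y i => φ (y, i)) e (by
    intro u v huv heq
    have h1 := φ.map_rel (hH0 _ _ _ huv)
    apply he (fun i => φ (u, i))
    have h2 := congrFun heq (e (fun i => φ (u, i))).1.2
    exact h2 ▸ h1)
  have h2 := card_le_univ (univ.image (fun (y : Y) (i : α) => φ (y, i)))
  omega

set_option maxHeartbeats 2000000 in
open Classical in
lemma homcount_aux {α : Type u} {Y : Type u} [Fintype α] [Fintype Y] (F : SimpleGraph α)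
    {i0 j0 : α} (hF : F.Adj i0 j0) (N : ℕ)
    (τ : {p : α × α // F.Adj p.1 p.2} → Y → Y → Prop)
    (H : SimpleGraph ((Y × α) × Fin N))
    (hH : ∀ u v, H.Adj u v → ∃ h : F.Adj u.1.2 v.1.2,
      τ ⟨(u.1.2, v.1.2), h⟩ u.1.1 v.1.1 ∨ τ ⟨(v.1.2, u.1.2), h.symm⟩ v.1.1 u.1.1)
    (c : ℝ) (k : ℕ)
    (hc : ∀ (Ω : Type u) [Fintype Ω] (R : {p : α × α // F.Adj p.1 p.2} → Ω → Ω → Prop) (N' : ℝ),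
      0 < N' → (Fintype.card Ω : ℝ) ≤ N' →
      (∀ e δ, 0 < δ → ∀ B : Finset Ω, δ * N' ≤ (B.card:ℝ) →
        ∃ T ∈ B, δ ^ 3 / 32 * N' ≤ ((B.filter (fun T' => R e T T')).card : ℝ)) →
      ∀ δ, 0 < δ → ∀ S : Finset Ω, δ * N' ≤ (S.card:ℝ) →
        c * δ ^ k * N' ^ (Fintype.card Y * Fintype.card (α × Fin N)) ≤
          (((univ : Finset (Y × (α × Fin N) → Ω)).filter (fun f => (∀ p, f p ∈ S) ∧
            ∀ e u v m m', τ e u v → R e (f (u, m)) (f (v, m')))).card : ℝ))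
    {n : ℕ} (hn : 0 < n) (Γ : SimpleGraph (Fin n)) (ε : ℝ) (hε : 0 < ε)
    (hfar : FarFromFree F Γ ε) :
    c * (ε / (Fintype.card α : ℝ) ^ 2) ^ k * (n : ℝ) ^ (Fintype.card ((Y × α) × Fin N)) ≤
      (((univ : Finset ((Y × α) × Fin N → Fin n)).filter
        (fun f => ∀ u v, H.Adj u v → Γ.Adj (f u) (f v))).card : ℝ) := by
  obtain ⟨𝒯, hT1, hT2, hT3⟩ := packing_aux F hF Γ ε hfar
  have hnR : (0 : ℝ) < n := by exact_mod_cast hn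
  have hαne : Nonempty α := ⟨i0⟩
  have hα : (0 : ℝ) < Fintype.card α := by exact_mod_cast Fintype.card_pos
  have hcardW : Fintype.card Y * Fintype.card (α × Fin N) = Fintype.card ((Y × α) × Fin N) := by
    simp [Fintype.card_prod, mul_assoc]
  have hδ : 0 < ε / (Fintype.card α : ℝ) ^ 2 := by positivity
  have hinj : ∀ i j, F.Adj i j → ∀ T T' : {T // T ∈ 𝒯}, T.1 i = T'.1 i → T.1 j = T'.1 j →
      T = T' := fun i j hij T T' h1 h2 => Subtype.ext (hT2 T.1 T.2 T'.1 T'.2 i j hij h1 h2)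
  have hΩ : (Fintype.card {T // T ∈ 𝒯} : ℝ) ≤ (n : ℝ) ^ 2 := by
    have : Fintype.card {T // T ∈ 𝒯} ≤ Fintype.card (Fin n × Fin n) :=
      Fintype.card_le_of_injective (fun T : {T // T ∈ 𝒯} => (T.1 i0, T.1 j0))
        (fun T T' h => hinj i0 j0 hF T T' (congrArg Prod.fst h) (congrArg Prod.snd h))
    rw [Fintype.card_prod, Fintype.card_fin, ← sq] at this
    exact_mod_cast this
  have hmain := hc {T // T ∈ 𝒯} (fun e T T' => Γ.Adj (T.1 e.1.1) (T'.1 e.1.2)) ((n : ℝ) ^ 2)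
    (by positivity) hΩ
    (fun e δ hδ B hB => star_aux hn Γ (fun T : {T // T ∈ 𝒯} => T.1 e.1.1)
      (fun T => T.1 e.1.2) (fun T => hT1 T.1 T.2 _ _ e.2) (hinj _ _ e.2) δ hδ B hB)
    (ε / (Fintype.card α : ℝ) ^ 2) hδ univ (by
      rw [card_univ, Fintype.card_coe, div_mul_eq_mul_div, div_le_iff₀ (by positivity)]
      linarith)
  set X := (univ : Finset (Y × (α × Fin N) → {T // T ∈ 𝒯})).filter (fun f =>
    (∀ p, f p ∈ (univ : Finset {T // T ∈ 𝒯})) ∧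
      ∀ e u v m m', τ e u v → Γ.Adj ((f (u, m)).1 e.1.1) ((f (v, m')).1 e.1.2)) with hX
  have hm : ∀ i : α, ∃ i' : α, (∃ j, F.Adj i' j) ∧ ((∃ j, F.Adj i j) → i' = i) := by
    intro i
    by_cases h : ∃ j, F.Adj i j
    · exact ⟨i, h, fun _ => rfl⟩
    · exact ⟨i0, ⟨j0, hF⟩, fun h' => absurd h' h⟩
  choose m hm1 hm2 using hm
  choose nb hnb using hm1
  let Φ : (Y × (α × Fin N) → {T // T ∈ 𝒯}) → ((Y × α) × Fin N → Fin n) :=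
    fun f w => (f (w.1.1, (w.1.2, w.2))).1 (m w.1.2)
  have himg : X.image Φ ⊆ (univ : Finset ((Y × α) × Fin N → Fin n)).filter
        (fun f => ∀ u v, H.Adj u v → Γ.Adj (f u) (f v)) := by
    intro g hg
    obtain ⟨f, hf, rfl⟩ := mem_image.mp hg
    have hf2 := (mem_filter.mp hf).2.2
    refine mem_filter.mpr ⟨mem_univ _, ?_⟩
    intro u v huv
    obtain ⟨h, h'⟩ := hH u v huv
    simp only [Φ]
    rw [hm2 _ ⟨_, h⟩, hm2 _ ⟨_, h.symm⟩]
    rcases h' with h' | h'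
    · exact hf2 _ _ _ _ _ h'
    · exact (hf2 _ _ _ (v.1.2, v.2) (u.1.2, u.2) h').symm
  have hfib : X.card ≤ n ^ (Fintype.card ((Y × α) × Fin N)) * (X.image Φ).card := by
    refine card_le_mul_card_image (f := Φ) X _ ?_
    intro g _
    have : (X.filter (fun f => Φ f = g)).card ≤
        (univ : Finset ((Y × α) × Fin N → Fin n)).card := by
      refine card_le_card_of_injOn
        (fun f w => (f (w.1.1, (w.1.2, w.2))).1 (nb w.1.2)) (fun _ _ => mem_coe.mpr (mem_univ _)) ?_
      intro f hf f' hf' h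
      have h1 := (mem_filter.mp (mem_coe.mp hf)).2
      have h2 := (mem_filter.mp (mem_coe.mp hf')).2
      funext p
      obtain ⟨y, i, a⟩ := p
      exact hinj _ _ (hnb i) _ _ (congrFun (h1.trans h2.symm) ((y, i), a))
        (congrFun h ((y, i), a))
    rw [card_univ, Fintype.card_fun, Fintype.card_fin] at this
    exact this
  have h3 := hfib.trans (Nat.mul_le_mul_left _ (card_le_card himg))
  generalize ((univ : Finset ((Y × α) × Fin N → Fin n)).filter
        (fun f => ∀ u v, H.Adj u v → Γ.Adj (f u) (f v))).card = q at h3 ⊢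
  rw [hcardW] at hmain
  clear himg hfib hc
  replace hmain : c * (ε / (Fintype.card α : ℝ) ^ 2) ^ k *
      ((n : ℝ) ^ 2) ^ (Fintype.card ((Y × α) × Fin N)) ≤ (X.card : ℝ) := by
    convert hmain
  generalize X.card = x at h3 hmain
  generalize Fintype.card ((Y × α) × Fin N) = v at *
  generalize (ε / (Fintype.card α : ℝ) ^ 2) ^ k = d at *
  have h4 : (x : ℝ) ≤ (n : ℝ) ^ v * q := by exact_mod_cast h3
  have hp : (0 : ℝ) < (n : ℝ) ^ v := by positivity
  have h5 : ((n : ℝ) ^ 2) ^ v = (n : ℝ) ^ v * (n : ℝ) ^ v := by ring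
  rw [h5] at hmain
  refine le_of_mul_le_mul_left ?_ hp
  linarith

lemma copyCount_iso {β β' δ : Type*} (H : SimpleGraph β) (H' : SimpleGraph β') (e : H ≃g H')
    (Γ : SimpleGraph δ) : copyCount H Γ = copyCount H' Γ := by
  unfold copyCount
  congr 1
  ext G'
  exact ⟨fun ⟨f⟩ => ⟨e.symm.trans f⟩, fun ⟨f⟩ => ⟨e.trans f⟩⟩

lemma abundant_aux {α β : Type*} [Fintype β] [Nonempty β] (F : SimpleGraph α) (H : SimpleGraph β)
    (a c : ℝ) (ha : 0 < a) (hc : 0 < c) (k : ℕ)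
    (h : ∀ n : ℕ, 0 < n → ∀ Γ : SimpleGraph (Fin n), ∀ ε : ℝ, 0 < ε → FarFromFree F Γ ε →
      ∃ s : ℕ, c * (ε / a) ^ k * (n : ℝ) ^ Fintype.card β ≤ s ∧
      n * s ≤ n * (Fintype.card β ^ Fintype.card β * copyCount H Γ) +
        Fintype.card β ^ 2 * n ^ Fintype.card β) : Abundant F H := by
  set v := Fintype.card β with hv
  have hv0 : 0 < v := Fintype.card_pos
  have hvR : (0 : ℝ) < v := by exact_mod_cast hv0
  refine ⟨c / (a ^ k * (2 * (v : ℝ) ^ v)), (k : ℝ) + 1, by positivity, by positivity, ?_⟩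
  intro ε hε hε1
  set ρ := c * (ε / a) ^ k with hρ
  have hρ0 : 0 < ρ := by positivity
  refine ⟨⌈2 * (v : ℝ) ^ 2 / ρ⌉₊ + 1, ?_⟩
  intro n hn Γ hfar
  have hn0 : 0 < n := by omega
  have hnR : (0 : ℝ) < n := by exact_mod_cast hn0
  obtain ⟨s, hs1, hs2⟩ := h n hn0 Γ ε hε hfar
  have hs2' : (n : ℝ) * s ≤ n * ((v : ℝ) ^ v * copyCount H Γ) + (v : ℝ) ^ 2 * (n : ℝ) ^ v := by
    exact_mod_cast hs2
  have hbig : (v : ℝ) ^ 2 ≤ ρ / 2 * n := by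
    have h1 : 2 * (v : ℝ) ^ 2 / ρ ≤ n := by
      refine (Nat.le_ceil _).trans ?_
      exact_mod_cast (by omega : ⌈2 * (v : ℝ) ^ 2 / ρ⌉₊ ≤ n)
    rw [div_le_iff₀ hρ0] at h1
    linarith
  have hp : (0 : ℝ) < (n : ℝ) ^ v := by positivity
  have h5 : ρ / 2 * (n : ℝ) ^ v ≤ (v : ℝ) ^ v * copyCount H Γ := by
    have h6 := mul_le_mul_of_nonneg_left hs1 hnR.le
    have h7 := mul_le_mul_of_nonneg_right hbig hp.le
    refine le_of_mul_le_mul_left ?_ hnR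
    nlinarith
  rw [Nat.card_eq_fintype_card, ← hv]
  have h8 : ε ^ ((k : ℝ) + 1) ≤ ε ^ k := by
    have : ((k : ℝ) + 1) = ((k + 1 : ℕ) : ℝ) := by push_cast; rfl
    rw [this, Real.rpow_natCast]
    exact pow_le_pow_of_le_one hε.le hε1.le (Nat.le_succ k)
  have hvv : (0 : ℝ) < (v : ℝ) ^ v := by positivity
  calc c / (a ^ k * (2 * (v : ℝ) ^ v)) * ε ^ ((k : ℝ) + 1) * (n : ℝ) ^ v
      ≤ c / (a ^ k * (2 * (v : ℝ) ^ v)) * ε ^ k * (n : ℝ) ^ v := by gcongr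
    _ = (ρ / 2 * (n : ℝ) ^ v) / (v : ℝ) ^ v := by
        rw [hρ, div_pow]; field_simp
    _ ≤ copyCount H Γ := by
        rw [div_le_iff₀ hvv]; linarith


end Helpers

/-- If `F` has at least one edge and there is no homomorphism from
`F` to `G`, then for every positive integer `ℓ` there is a graph `H` that is
`F`-abundant, has girth greater than `ℓ` (no cycle of length at most `ℓ`), and
admits no homomorphism to `G`. -/
theorem stmt_3 {α γ : Type*} [Fintype α] [Fintype γ]
    (ℓ : ℕ) (hℓ : 0 < ℓ) (F : SimpleGraph α) (G : SimpleGraph γ)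
    (hF : F.edgeSet.Nonempty) (hFG : IsEmpty (F →g G)) :
    ∃ (n : ℕ) (H : SimpleGraph (Fin n)), Abundant F H ∧
      (∀ (v : Fin n) (w : H.Walk v v), w.IsCycle → ℓ < w.length) ∧
      IsEmpty (H →g G) := by
  classical
  obtain ⟨e0, he0⟩ := hF
  induction e0 using Sym2.ind with
  | _ i0 j0 =>
  rw [SimpleGraph.mem_edgeSet] at he0
  obtain ⟨Y, hY, τ, hτ, hcount⟩ := tree_aux (E := {p : α × α // F.Adj p.1 p.2})
    (Fintype.card (α → γ) + 1)
  let H0 : SimpleGraph (Y × α) :=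
    { Adj := fun u v => ∃ h : F.Adj u.2 v.2,
        τ ⟨(u.2, v.2), h⟩ u.1 v.1 ∨ τ ⟨(v.2, u.2), h.symm⟩ v.1 u.1
      symm := ⟨fun u v ⟨h, h'⟩ => ⟨h.symm, h'.symm⟩⟩
      loopless := ⟨fun u ⟨h, _⟩ => F.irrefl h⟩ }
  have hH0 : IsEmpty (H0 →g G) := nohom_aux F G hFG τ
    (fun κ e h => by convert hτ (α → γ) κ e h) H0 (fun e u v h => ⟨e.2, Or.inl h⟩)
  obtain ⟨N, H, hsub, hcyc, hno⟩ := sparse_aux ℓ H0 G hH0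
  have hW : Nonempty ((Y × α) × Fin N) := by
    by_contra hcon
    rw [not_nonempty_iff] at hcon
    exact hno.false ⟨fun w => (hcon.false w).elim, fun {a} => (hcon.false a).elim⟩
  have hM : Nonempty (α × Fin N) := by
    obtain ⟨w⟩ := hW
    exact ⟨(w.1.2, w.2)⟩
  obtain ⟨c, hc, k, hck⟩ := hcount (α × Fin N)
  have hab : Abundant F H := by
    have hαne : Nonempty α := ⟨i0⟩
    have hα : (0 : ℝ) < Fintype.card α := by exact_mod_cast Fintype.card_pos
    refine abundant_aux F H ((Fintype.card α : ℝ) ^ 2) c (by positivity) hc k ?_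
    intro n hn Γ ε hε hfar
    refine ⟨_, homcount_aux F he0 N τ H (fun u v h => hsub u v h) c k ?_ hn Γ ε hε hfar,
      by convert copies_aux H Γ⟩
    intro Ω _ R N' h1 h2 h3 δ h4 S h5
    convert hck Ω R N' h1 h2 (fun e δ hδ B hB => by convert h3 e δ hδ B hB) δ h4 S h5
  let e : H ≃g (H.map (Fintype.equivFin ((Y × α) × Fin N)).toEmbedding) :=
    SimpleGraph.Iso.map (Fintype.equivFin ((Y × α) × Fin N)) H
  refine ⟨_, H.map (Fintype.equivFin ((Y × α) × Fin N)).toEmbedding, ?_, ?_, ?_⟩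
  · obtain ⟨c, C, h1, h2, h3⟩ := hab
    refine ⟨c, C, h1, h2, fun ε hε hε1 => ?_⟩
    obtain ⟨n₀, h4⟩ := h3 ε hε hε1
    refine ⟨n₀, fun n hn Γ hfar => ?_⟩
    have := h4 n hn Γ hfar
    rw [copyCount_iso H _ e Γ] at this
    rw [Nat.card_eq_fintype_card] at this
    rwa [Nat.card_fin]
  · intro v w hw
    have h1 := hcyc _ (w.map e.symm.toHom) (hw.map e.symm.injective)
    rwa [SimpleGraph.Walk.length_map] at h1
  · exact ⟨fun φ => hno.false (φ.comp e.toHom)⟩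
end
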